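/- arXiv:2303.06003 — 10 statements merged into one kernel-verified Lean document; each statement's English description precedes it below -/
import Mathlib

section
/- Let n ≥ 6 and let G = Aₙ be the alternating group on n letters. Suppose G acts on a finite set Ω and the action is binary. Then every orbit of G on Ω is either trivial (consists of a single point) or regular (the stabilizer in G of every point of the orbit is the trivial subgroup). -/
/-!
Among the pointwise stabilizers of finite sets containing `ω`, let `K` be minimal among the
nontrivial ones. By minimality, an element conjugating one nontrivial element of `K` into `K`
normalizes `K`. Comparing two tuples with binarity then shows: if `1 ≠ b * c ∈ K` and each of `b`
and `c` is conjugate to an element of `K`, then both lie in `K`.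

A nontrivial subgroup of `Aₙ` with this property is all of `Aₙ`. Let `g ∈ K` have prime order `p`.
For `p = 2`, splitting `g` along Klein four-groups puts a product of two transpositions in `K`.
For `p > 2`, `K` contains the commutator of `g ^ 2` with any `s` that commutes with
`g * s * g⁻¹`; a suitable product `s` of two transpositions makes this commutator a product of two
disjoint transpositions if `g` is not a single cycle, and a three-cycle if `p ≥ 7`. Single cycles of
length 3 need no argument and those of length 5 are factored by hand. On six points, a product of
two disjoint transpositions produces a three-cycle, and a three-cycle produces all the others.
-/

/-- An action of `G` on `Ω` is *binary* if for every `n` and every pair of tuples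
`I, J ∈ Ωⁿ`, whenever `I` and `J` are 2-related (every subtuple of length at most 2 of `I`
can be mapped to the corresponding subtuple of `J` by an element of `G`), there is a single
element of `G` mapping `I` to `J` entrywise. -/
def IsBinary (G Ω : Type*) [Group G] [MulAction G Ω] : Prop :=
  ∀ (n : ℕ) (I J : Fin n → Ω),
    (∀ i j : Fin n, ∃ g : G, g • I i = J i ∧ g • I j = J j) →
    ∃ g : G, ∀ i, g • I i = J i

open MulAction
open scoped Pointwise commutatorElement

section Group

variable {G : Type*} [Group G]

/-- `K` is *factor closed* under `H` if a nontrivial product lying in `K`, both of whose factors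
are conjugate into `K` by elements of `H`, has its first factor in `K` (hence also the second). This
is what binarity says about pointwise stabilizers; the conjugators are restricted to `H` so that `K`
may be a subgroup of `H` studied inside the larger group `G`. -/
def FactorClosed (H K : Subgroup G) : Prop :=
  ∀ b c, b * c ∈ K → b * c ≠ 1 → (∃ x ∈ H, x * b * x⁻¹ ∈ K) → (∃ y ∈ H, y * c * y⁻¹ ∈ K) → b ∈ K

section Binary

variable {Ω : Type*} [MulAction G Ω]

theorem IsBinary.exists_smul (h : IsBinary G Ω) {ι : Type*} [Finite ι] (I J : ι → Ω)
    (hIJ : ∀ i j, ∃ g : G, g • I i = J i ∧ g • I j = J j) : ∃ g : G, ∀ i, g • I i = J i := by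
  obtain ⟨n, ⟨e⟩⟩ := Finite.exists_equiv_fin ι
  obtain ⟨g, hg⟩ := h n (I ∘ e.symm) (J ∘ e.symm) fun i j => hIJ _ _
  exact ⟨g, fun i => by simpa using hg (e i)⟩

theorem IsBinary.exists_mem_fixingSubgroup_inf (h : IsBinary G Ω) {A B C : Set Ω}
    (hA : A.Finite) (hB : B.Finite) (hC : C.Finite) {b c : G} (hb : b ∈ fixingSubgroup G B)
    (hc : c ∈ fixingSubgroup G C) (hbc : b * c ∈ fixingSubgroup G A) :
    ∃ z ∈ fixingSubgroup G A ⊓ fixingSubgroup G B, z⁻¹ * (b * c) ∈ fixingSubgroup G C := by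
  have := hA.to_subtype
  have := hB.to_subtype
  have := hC.to_subtype
  simp only [mem_fixingSubgroup_iff] at hb hc hbc
  have hbC (s : C) : b • (s : Ω) = (b * c) • (s : Ω) := by rw [mul_smul, hc s s.2]
  -- `(A, B, C)` and `(A, B, (b * c) • C)` are 2-related through `1`, `b * c` and `b`.
  obtain ⟨z, hz⟩ := h.exists_smul (ι := A ⊕ B ⊕ C)
    (Sum.elim (↑) (Sum.elim (↑) (↑)))
    (Sum.elim (↑) (Sum.elim (↑) fun s : C => (b * c) • (s : Ω))) (by
      rintro (i | i | i) (j | j | j)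
      exacts [⟨1, by simp⟩, ⟨1, by simp⟩, ⟨b * c, hbc i i.2, rfl⟩, ⟨1, by simp⟩, ⟨1, by simp⟩,
        ⟨b, hb i i.2, hbC j⟩, ⟨b * c, rfl, hbc j j.2⟩, ⟨b, hbC i, hb j j.2⟩, ⟨b * c, rfl, rfl⟩])
  simp only [Sum.forall, Sum.elim_inl, Sum.elim_inr, Subtype.forall] at hz
  obtain ⟨hzA, hzB, hzC⟩ := hz
  refine ⟨z, ⟨(mem_fixingSubgroup_iff G).2 hzA, (mem_fixingSubgroup_iff G).2 hzB⟩,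
    (mem_fixingSubgroup_iff G).2 fun s hs => ?_⟩
  rw [mul_smul, ← hzC s hs, inv_smul_smul]

theorem mem_fixingSubgroup_inv_smul_iff {x g : G} {S : Set Ω} :
    g ∈ fixingSubgroup G (x⁻¹ • S) ↔ x * g * x⁻¹ ∈ fixingSubgroup G S := by
  simp only [mem_fixingSubgroup_iff, ← Set.image_smul, Set.forall_mem_image, mul_smul,
    ← eq_inv_smul_iff (g := x)]

theorem mem_normalizer_of_minimal_fixingSubgroup {ω : Ω} {K : Subgroup G}
    (hK : Minimal (fun K => K ≠ ⊥ ∧ ∃ S : Set Ω, S.Finite ∧ ω ∈ S ∧ fixingSubgroup G S = K) K)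
    {x z : G} (hz : z ∈ K) (hz1 : z ≠ 1) (hxz : x * z * x⁻¹ ∈ K) :
    x ∈ Subgroup.normalizer (K : Set G) := by
  obtain ⟨⟨-, S, hS, hω, rfl⟩, hmin⟩ := hK
  have conj_mem {y w : G} (hw : w ∈ fixingSubgroup G S) (hw1 : w ≠ 1)
      (hyw : y * w * y⁻¹ ∈ fixingSubgroup G S) {k : G} (hk : k ∈ fixingSubgroup G S) :
      y * k * y⁻¹ ∈ fixingSubgroup G S := by
    have hw' : w ∈ fixingSubgroup G (S ∪ y⁻¹ • S) := by
      rw [fixingSubgroup_union]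
      exact ⟨hw, mem_fixingSubgroup_inv_smul_iff.2 hyw⟩
    have hle := hmin ⟨fun h => hw1 (by rwa [h, Subgroup.mem_bot] at hw'), _,
      hS.union hS.smul_set, Or.inl hω, rfl⟩
      (fixingSubgroup_antitone G Ω Set.subset_union_left)
    exact mem_fixingSubgroup_inv_smul_iff.1
      (fixingSubgroup_antitone G Ω Set.subset_union_right (hle hk))
  refine Subgroup.mem_normalizer_iff.2 fun k => ⟨conj_mem hz hz1 hxz, fun hk => ?_⟩
  have hz' : x⁻¹ * (x * z * x⁻¹) * x⁻¹⁻¹ = z := by group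
  have hk' : x⁻¹ * (x * k * x⁻¹) * x⁻¹⁻¹ = k := by group
  rw [← hk']
  exact conj_mem hxz (by rwa [Ne, conj_eq_one_iff]) (by rwa [hz']) hk

theorem IsBinary.exists_factorClosed [WellFoundedLT (Subgroup G)] (h : IsBinary G Ω) {ω : Ω}
    (hω : stabilizer G ω ≠ ⊥) : ∃ K ≤ stabilizer G ω, K ≠ ⊥ ∧ FactorClosed ⊤ K := by
  obtain ⟨K, hK⟩ := exists_minimal_of_wellFoundedLT
    (fun K => K ≠ ⊥ ∧ ∃ S : Set Ω, S.Finite ∧ ω ∈ S ∧ fixingSubgroup G S = K)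
    ⟨_, hω, {ω}, Set.finite_singleton ω, rfl, by ext; simp [mem_fixingSubgroup_iff]⟩
  have hTI {x z : G} := mem_normalizer_of_minimal_fixingSubgroup (x := x) (z := z) hK
  obtain ⟨⟨hbot, S, hS, hωS, rfl⟩, -⟩ := hK
  refine ⟨_, fun g hg => (mem_fixingSubgroup_iff G).1 hg ω hωS, hbot, ?_⟩
  rintro b c hbc hbc1 ⟨x, -, hb⟩ ⟨y, -, hc⟩
  obtain ⟨z, hz, hzC⟩ := h.exists_mem_fixingSubgroup_inf hS hS.smul_set hS.smul_set
    (mem_fixingSubgroup_inv_smul_iff.2 hb) (mem_fixingSubgroup_inv_smul_iff.2 hc) hbc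
  rw [Subgroup.mem_inf, mem_fixingSubgroup_inv_smul_iff] at hz
  rw [mem_fixingSubgroup_inv_smul_iff] at hzC
  by_cases hz1 : z = 1
  · rw [hz1, inv_one, one_mul] at hzC
    have hcK := (Subgroup.mem_normalizer_iff.1 (hTI hbc hbc1 hzC) c).2 hc
    exact (mul_mem_cancel_right hcK).1 hbc
  · exact (Subgroup.mem_normalizer_iff.1 (hTI hz.1 hz1 hz.2) b).2 hb

end Binary

namespace FactorClosed

variable {H K : Subgroup G}

theorem map_subtype {K : Subgroup H} (hK : FactorClosed ⊤ K) :
    FactorClosed H (K.map H.subtype) := by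
  rintro b c ⟨a, ha, hbc⟩ hbc1 ⟨x, hx, k, hk, hxb⟩ ⟨y, hy, l, hl, hyc⟩
  have hb : b ∈ H := by
    rw [← H.mul_mem_cancel_left hx, ← H.mul_mem_cancel_right (H.inv_mem hx), ← hxb]
    exact k.2
  have hc : c ∈ H := by
    rw [← H.mul_mem_cancel_left hy, ← H.mul_mem_cancel_right (H.inv_mem hy), ← hyc]
    exact l.2
  obtain rfl : a = ⟨b, hb⟩ * ⟨c, hc⟩ := Subtype.ext hbc
  obtain rfl : k = ⟨x, hx⟩ * ⟨b, hb⟩ * ⟨x, hx⟩⁻¹ := Subtype.ext hxb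
  obtain rfl : l = ⟨y, hy⟩ * ⟨c, hc⟩ * ⟨y, hy⟩⁻¹ := Subtype.ext hyc
  exact ⟨⟨b, hb⟩, hK _ _ ha (fun h => hbc1 (congrArg Subtype.val h)) ⟨_, trivial, hk⟩
    ⟨_, trivial, hl⟩, rfl⟩

theorem comap (hK : FactorClosed H K) {G' : Type*} [Group G'] {f : G' →* G}
    (hf : Function.Injective f) : FactorClosed (H.comap f) (K.comap f) := by
  rintro b c hbc hbc1 ⟨x, hx, hb⟩ ⟨y, hy, hc⟩
  refine hK (f b) (f c) (by simpa using hbc) ?_ ⟨f x, hx, by simpa using hb⟩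
    ⟨f y, hy, by simpa using hc⟩
  rwa [← map_mul, Ne, map_eq_one_iff f hf]

/-- With `t = ⁅s, g ^ 2⁆ = ⁅s * (g * s * g⁻¹), g⁆`, both `t * g` and `t * g ^ 2` are conjugates of
elements of `K`, and `(t * g)⁻¹ * (t * g ^ 2) = g`. -/
theorem commutatorElement_sq_mem (hK : FactorClosed H K) {g s : G} (hg : g ∈ K) (hs : s ∈ H)
    (hgs : g * s * g⁻¹ ∈ H) (hcomm : Commute s (g * s * g⁻¹)) : ⁅s, g ^ 2⁆ ∈ K := by
  obtain rfl | hg1 := eq_or_ne g 1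
  · simp
  set t := ⁅s, g ^ 2⁆ with ht
  set u := s * (g * s * g⁻¹) with hu
  have htg : (t * g)⁻¹ = u * g⁻¹ * u⁻¹ := by
    have : t * g = (s * (g * s * g⁻¹)) * g * ((g * s * g⁻¹) * s)⁻¹ := by
      rw [ht, commutatorElement_def, pow_two]
      group
    rw [this, hcomm.eq.symm, ← hu]
    group
  have htg2 : t * g ^ 2 = s * g ^ 2 * s⁻¹ := by
    rw [ht, commutatorElement_def, inv_mul_cancel_right]
  have hprod : (t * g)⁻¹ * (t * g ^ 2) = g := by
    rw [mul_inv_rev, mul_assoc, inv_mul_cancel_left, pow_two, inv_mul_cancel_left]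
  have htgK : (t * g)⁻¹ ∈ K := by
    refine hK _ (t * g ^ 2) (by rwa [hprod]) (by rwa [hprod])
      ⟨u⁻¹, inv_mem (mul_mem hs hgs), ?_⟩ ⟨s⁻¹, inv_mem hs, ?_⟩
    · rw [htg]
      convert inv_mem hg using 1
      group
    · rw [htg2]
      convert pow_mem hg 2 using 1
      group
  exact (K.mul_mem_cancel_right hg).1 (inv_mem_iff.1 htgK)

end FactorClosed

end Group

open Equiv Equiv.Perm

section Perm

variable {α β : Type*}

theorem viaEmbeddingHom_trans (ι : β ↪ α) (u : Perm α) (σ : Perm β) :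
    viaEmbeddingHom (ι.trans u.toEmbedding) σ = u * viaEmbeddingHom ι σ * u⁻¹ := by
  rw [eq_mul_inv_iff_mul_eq]
  ext y
  simp only [Perm.mul_apply, viaEmbeddingHom_apply]
  by_cases hy : y ∈ Set.range ι
  · obtain ⟨i, rfl⟩ := hy
    rw [viaEmbedding_apply]
    exact viaEmbedding_apply σ (ι.trans u.toEmbedding) i
  · rw [viaEmbedding_apply_of_notMem _ _ y hy, viaEmbedding_apply_of_notMem]
    rintro ⟨i, hi⟩
    exact hy ⟨i, u.injective hi⟩

theorem minimalPeriod_eq_of_pow_prime_eq_one {p : ℕ} [Fact p.Prime] {g : Perm α} (hg : g ^ p = 1)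
    {x : α} (hx : g x ≠ x) : Function.minimalPeriod g x = p :=
  Function.minimalPeriod_eq_prime
    (by rw [Function.IsPeriodicPt, Function.IsFixedPt, iterate_eq_pow, hg, one_apply]) hx

theorem dvd_of_pow_apply_eq_self {p : ℕ} [Fact p.Prime] {g : Perm α} (hg : g ^ p = 1) {x : α}
    (hx : g x ≠ x) {i : ℕ} (hi : (g ^ i) x = x) : p ∣ i := by
  rw [← minimalPeriod_eq_of_pow_prime_eq_one hg hx]
  exact Function.IsPeriodicPt.minimalPeriod_dvd (by rwa [← iterate_eq_pow] at hi)

theorem nodup_map_pow_apply {p : ℕ} [Fact p.Prime] {g : Perm α} (hg : g ^ p = 1) {x : α}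
    (hx : g x ≠ x) {l : List ℕ} (hl : l.Nodup) (hlt : ∀ i ∈ l, i < p) :
    (l.map fun i => (g ^ i) x).Nodup := by
  refine hl.map_on fun i hi j hj hij => ?_
  have hp := minimalPeriod_eq_of_pow_prime_eq_one hg hx
  refine (Function.iterate_eq_iterate_iff_of_lt_minimalPeriod (f := g) (x := x)
    (hp ▸ hlt i hi) (hp ▸ hlt j hj)).1 ?_
  simpa only [iterate_eq_pow] using hij

theorem nodup_of_not_sameCycle {g : Perm α} {x y : α} (hxy : ¬ g.SameCycle x y) {i : ℕ}
    (hx : (g ^ i) x ≠ x) (hy : (g ^ i) y ≠ y) : [x, y, (g ^ i) x, (g ^ i) y].Nodup := by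
  have hne : x ≠ y := fun h => hxy (h.sameCycle g)
  have hxy' : x ≠ (g ^ i) y := fun h => hxy (sameCycle_pow_right.1 (h.sameCycle g))
  have hyx' : y ≠ (g ^ i) x := fun h => hxy (sameCycle_pow_left.1 (h.symm.sameCycle g))
  simp [hne, hxy', hyx', hx.symm, hy.symm]

variable [Fintype α] [DecidableEq α] [Fintype β] [DecidableEq β]

theorem sign_viaEmbeddingHom (ι : β ↪ α) (σ : Perm β) : sign (viaEmbeddingHom ι σ) = sign σ := by
  rw [viaEmbeddingHom_apply, viaEmbedding]
  convert sign_extendDomain σ _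

theorem cycleType_viaEmbeddingHom (ι : β ↪ α) (σ : Perm β) :
    (viaEmbeddingHom ι σ).cycleType = σ.cycleType := by
  rw [viaEmbeddingHom_apply, viaEmbedding]
  convert cycleType_extendDomain _

theorem exists_viaEmbeddingHom_eq (h : Fintype.card β ≤ Fintype.card α) {σ : Perm β} {τ : Perm α}
    (hστ : σ.cycleType = τ.cycleType) : ∃ ι : β ↪ α, viaEmbeddingHom ι σ = τ := by
  obtain ⟨ι⟩ := Function.Embedding.nonempty_of_card_le h
  obtain ⟨u, hu⟩ := isConj_iff.1
    (isConj_iff_cycleType_eq.2 ((cycleType_viaEmbeddingHom ι σ).trans hστ))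
  exact ⟨ι.trans u.toEmbedding, by rw [viaEmbeddingHom_trans, hu]⟩

theorem cycleType_eq_of_pow_prime_eq_one {p : ℕ} [hp : Fact p.Prime] {σ : Perm β} {τ : Perm α}
    (hσ : σ ^ p = 1) (hτ : τ ^ p = 1) (h : σ.support.card = τ.support.card) :
    σ.cycleType = τ.cycleType := by
  have hσ' := cycleType_of_pow_prime_eq_one hσ
  have hτ' := cycleType_of_pow_prime_eq_one hτ
  rw [← sum_cycleType, ← sum_cycleType, hσ', hτ', Multiset.sum_replicate, Multiset.sum_replicate,
    smul_eq_mul, smul_eq_mul, Nat.mul_left_inj hp.out.ne_zero] at h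
  rw [hσ', hτ', h]

theorem exists_card_support_eq_mul_four {g : Perm α} (hg : g ^ 2 = 1) (hsign : sign g = 1) :
    ∃ m, g.support.card = m * 4 := by
  have hcycle := cycleType_of_pow_prime_eq_one hg
  rw [sign_of_cycleType', hcycle, Multiset.map_replicate, Multiset.prod_replicate] at hsign
  obtain ⟨m, hm⟩ : Even g.cycleType.card :=
    (neg_one_pow_eq_one_iff_even (R := ℤ) (by decide)).1 (by simpa using congrArg Units.val hsign)
  refine ⟨m, ?_⟩
  rw [← sum_cycleType, hcycle, Multiset.sum_replicate, hm, smul_eq_mul]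
  ring

theorem exists_eq_swap_mul_swap_of_isThreeCycle {t : Perm α} (ht : t.IsThreeCycle) {x : α}
    (hx : t x ≠ x) : ∃ y z, [x, y, z].Nodup ∧ t = swap x y * swap x z := by
  have hx' : t.symm x ∈ t.support := by
    rwa [mem_support, Ne, apply_symm_apply, eq_symm_apply]
  have hnodup := ht.nodup_iff_mem_support.2 hx'
  have heq := ht.eq_swap_mul_swap_iff_mem_support.2 hx'
  rw [apply_symm_apply] at hnodup heq
  exact ⟨t.symm x, t x, by grind, by rwa [swap_comm (t.symm x)] at heq⟩

theorem exists_isConj_mul_eq_of_sq_eq_one {g : Perm α} (hg : g ^ 2 = 1) (hsign : sign g = 1) :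
    ∃ b c : Perm α, b * c = g ∧ IsConj g b ∧ IsConj g c ∧
      ∀ x, g x ≠ x → [x, g x, b x, b (g x)].Nodup := by
  obtain ⟨m, hm⟩ := exists_card_support_eq_mul_four hg hsign
  -- `g` acts like translation by `(1, 0) = (0, 1) + (1, 1)` on copies of the Klein four-group.
  let T (v : ZMod 2 × ZMod 2) : Perm (Fin m × ZMod 2 × ZMod 2) :=
    (Equiv.refl _).prodCongr (Equiv.addLeft v)
  have T_mul (u v) : T u * T v = T (u + v) := by
    ext ⟨i, w⟩ : 1
    simp [T, add_assoc]
  have cycleType_T {v} (hv : v ≠ 0) : (T v).cycleType = g.cycleType := by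
    refine cycleType_eq_of_pow_prime_eq_one (p := 2) ?_ hg ?_
    · rw [pow_two, T_mul, CharTwo.add_self_eq_zero]
      ext : 1
      simp [T]
    · have hT (w) : T v w ≠ w := by simpa [T, Prod.ext_iff] using hv
      rw [Finset.eq_univ_of_forall fun w => mem_support.2 (hT w), hm]
      simp
  obtain ⟨ι, hι⟩ := exists_viaEmbeddingHom_eq
    (by simpa [hm] using g.support.card_le_univ) (cycleType_T (v := (1, 0)) (by decide))
  have isConj_T {v} (hv : v ≠ 0) : IsConj g (viaEmbeddingHom ι (T v)) :=
    isConj_of_cycleType_eq (by rw [cycleType_viaEmbeddingHom, cycleType_T hv])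
  refine ⟨viaEmbeddingHom ι (T (0, 1)), viaEmbeddingHom ι (T (1, 1)), ?_, isConj_T (by decide),
    isConj_T (by decide), fun x hx => ?_⟩
  · rw [← map_mul, T_mul, ← hι]
    rfl
  · subst hι
    simp only [viaEmbeddingHom_apply] at hx ⊢
    obtain ⟨⟨i, v⟩, rfl⟩ : x ∈ Set.range ι :=
      not_imp_comm.1 (viaEmbedding_apply_of_notMem _ ι x) hx
    simp only [viaEmbedding_apply]
    suffices [v, (1, 0) + v, (0, 1) + v, (0, 1) + ((1, 0) + v)].Nodup from
      this.map (f := fun w => ι (i, w)) fun w w' h => by simpa using h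
    clear hx
    revert v
    decide

end Perm

namespace FactorClosed

variable {α : Type*} [Fintype α] [DecidableEq α] {L : Subgroup (Perm α)}

theorem comap_viaEmbeddingHom (hL : FactorClosed (alternatingGroup α) L) {β : Type*} [Fintype β]
    [DecidableEq β] (ι : β ↪ α) :
    FactorClosed (alternatingGroup β) (L.comap (viaEmbeddingHom ι)) := by
  have hcomap : (alternatingGroup α).comap (viaEmbeddingHom ι) = alternatingGroup β := by
    ext σ
    rw [Subgroup.mem_comap, mem_alternatingGroup, mem_alternatingGroup, sign_viaEmbeddingHom]
  exact hcomap ▸ hL.comap (viaEmbeddingHom_injective ι)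

theorem mem_of_isConj (hL : FactorClosed (alternatingGroup α) L) {g z : Perm α} (hg : g ∈ L)
    (hz : sign z = -1) (hzg : z * g * z⁻¹ ∈ L) {b c : Perm α} (hbc : b * c = g)
    (hb : IsConj g b) (hc : IsConj g c) : b ∈ L := by
  have exists_even {d : Perm α} (hd : IsConj g d) : ∃ x ∈ alternatingGroup α, x * d * x⁻¹ ∈ L := by
    obtain ⟨y, rfl⟩ := isConj_iff.1 hd
    obtain hy | hy := Int.units_eq_one_or (sign y)
    · exact ⟨y⁻¹, by simpa using hy, by simpa [mul_assoc] using hg⟩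
    · exact ⟨z * y⁻¹, by simp [hz, hy], by simpa [mul_assoc] using hzg⟩
  obtain rfl | hg1 := eq_or_ne g 1
  · obtain rfl := isConj_one_right.1 hb
    exact hg
  · exact hL b c (hbc ▸ hg) (hbc ▸ hg1) (exists_even hb) (exists_even hc)

theorem swap_mul_swap_mem_of_mem (hL : FactorClosed (alternatingGroup α) L) {x y z : α}
    (hxyz : [x, y, z].Nodup) (hmem : swap x y * swap x z ∈ L) {w : α} (hw : w ≠ x) :
    swap x y * swap x w ∈ L := by
  by_cases hwy : w = y
  · simp [hwy]
  by_cases hwz : w = z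
  · rwa [hwz]
  have isConj_of_ne {u v : α} (hu : x ≠ u) (hv : x ≠ v) (huv : u ≠ v) :
      IsConj (swap x y * swap x z) (swap x u * swap x v) := by
    refine isConj_of_cycleType_eq ?_
    rw [isThreeCycle_swap_mul_swap_same hu hv huv,
      isThreeCycle_swap_mul_swap_same (by grind) (by grind) (by grind)]
  refine hL.mem_of_isConj hmem (z := swap x y) (c := swap x w * swap x z)
    (sign_swap (by grind)) ?_ (by simp [mul_assoc]) (isConj_of_ne (by grind) (by grind) (by grind))
    (isConj_of_ne (by grind) (by grind) (by grind))
  simpa [mul_assoc] using inv_mem hmem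

theorem alternatingGroup_le_of_isThreeCycle_mem (hL : FactorClosed (alternatingGroup α) L)
    {t : Perm α} (ht : t.IsThreeCycle) (htL : t ∈ L) : alternatingGroup α ≤ L := by
  obtain ⟨x, hx : t x ≠ x⟩ := DFunLike.ne_iff.1 ht.ne_one
  obtain ⟨y, z, hxyz, rfl⟩ := exists_eq_swap_mul_swap_of_isThreeCycle ht hx
  have mem_of_ne {u v : α} (hu : u ≠ x) (hv : v ≠ x) : swap x u * swap x v ∈ L := by
    simpa [mul_assoc] using mul_mem (inv_mem (hL.swap_mul_swap_mem_of_mem hxyz htL hu))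
      (hL.swap_mul_swap_mem_of_mem hxyz htL hv)
  rw [← closure_three_cycles_eq_alternating, Subgroup.closure_le]
  intro σ hσ
  by_cases hσx : σ x = x
  · obtain ⟨a, ha : σ a ≠ a⟩ := DFunLike.ne_iff.1 hσ.ne_one
    have hax : a ≠ x := by rintro rfl; exact ha hσx
    obtain ⟨b, c, habc, rfl⟩ := exists_eq_swap_mul_swap_of_isThreeCycle hσ ha
    have hbx : b ≠ x := by grind [Perm.mul_apply]
    have hcx : c ≠ x := by grind [Perm.mul_apply]
    have swap_eq {v : α} (hav : a ≠ v) (hv : v ≠ x) :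
        swap a v = swap x a * swap x v * swap x a := by
      simpa [swap_apply_of_ne_of_ne hv hav.symm] using swap_apply_apply (swap x a) x v
    have hprod : swap a b * swap a c = swap x a * swap x b * (swap x c * swap x a) := by
      rw [swap_eq (by grind) hbx, swap_eq (by grind) hcx]
      simp [mul_assoc]
    rw [hprod]
    exact mul_mem (mem_of_ne hax hbx) (mem_of_ne hcx hax)
  · obtain ⟨b, c, hxbc, rfl⟩ := exists_eq_swap_mul_swap_of_isThreeCycle hσ hσx
    exact mem_of_ne (by grind) (by grind)

theorem exists_isThreeCycle_mem_of_cycleType_eq_two_two (hL : FactorClosed (alternatingGroup α) L)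
    (h6 : 6 ≤ Fintype.card α) {g : Perm α} (hgL : g ∈ L) (hg : g.cycleType = {2, 2}) :
    ∃ t ∈ L, t.IsThreeCycle := by
  obtain ⟨ι, rfl⟩ := exists_viaEmbeddingHom_eq (σ := (swap 0 1 * swap 2 3 : Perm (Fin 6)))
    (by simpa using h6) ((cycleType_swap_mul_swap_of_nodup (by decide)).trans hg.symm)
  set M := L.comap (viaEmbeddingHom ι)
  have hM : FactorClosed (alternatingGroup (Fin 6)) M := hL.comap_viaEmbeddingHom ι
  have isConj_of_nodup {x y z w x' y' z' w' : Fin 6} (h : [x, y, z, w].Nodup)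
      (h' : [x', y', z', w'].Nodup) : IsConj (swap x y * swap z w) (swap x' y' * swap z' w') :=
    isConj_of_cycleType_eq <| by
      rw [cycleType_swap_mul_swap_of_nodup h, cycleType_swap_mul_swap_of_nodup h']
  have h0123 : swap 0 1 * swap 2 3 ∈ M := hgL
  have h0145 : swap 0 1 * swap 4 5 ∈ M :=
    hM.mem_of_isConj (z := swap 0 1) (c := swap 2 3 * swap 4 5) h0123 (by decide)
      (by convert h0123 using 1; decide) (by decide) (isConj_of_nodup (by decide) (by decide))
      (isConj_of_nodup (by decide) (by decide))
  have h0213 : swap 0 2 * swap 1 3 ∈ M :=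
    hM.mem_of_isConj (z := swap 0 1) (c := swap 0 3 * swap 1 2) h0123 (by decide)
      (by convert h0123 using 1; decide) (by decide) (isConj_of_nodup (by decide) (by decide))
      (isConj_of_nodup (by decide) (by decide))
  have h0245 : swap 0 2 * swap 4 5 ∈ M :=
    hM.mem_of_isConj (z := swap 0 2) (c := swap 1 3 * swap 4 5) h0213 (by decide)
      (by convert h0213 using 1; decide) (by decide) (isConj_of_nodup (by decide) (by decide))
      (isConj_of_nodup (by decide) (by decide))
  refine ⟨_, M.mul_mem h0145 h0245, (cycleType_viaEmbeddingHom ι _).trans ?_⟩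
  rw [show swap 0 1 * swap 4 5 * (swap 0 2 * swap 4 5) = (swap 0 1 * swap 0 2 : Perm (Fin 6)) by
    decide]
  exact isThreeCycle_swap_mul_swap_same (by decide) (by decide) (by decide)

theorem exists_cycleType_eq_two_two_mem_of_sq_eq_one (hL : FactorClosed (alternatingGroup α) L)
    {g : Perm α} (hgL : g ∈ L) (hgA : g ∈ alternatingGroup α) (hg1 : g ≠ 1) (hg : g ^ 2 = 1) :
    ∃ t ∈ L, t.cycleType = {2, 2} := by
  obtain ⟨x, hx : g x ≠ x⟩ := DFunLike.ne_iff.1 hg1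
  obtain ⟨b, c, hbc, hb, hc, hnodup⟩ :=
    exists_isConj_mul_eq_of_sq_eq_one hg (mem_alternatingGroup.1 hgA)
  set z := swap x (g x)
  have hz : z * g * z⁻¹ = g := by
    have hgg : g (g x) = x := by rw [← Perm.mul_apply, ← pow_two, hg, one_apply]
    have : z = g * z * g⁻¹ := by
      rw [← swap_apply_apply, hgg, swap_comm]
    rw [mul_inv_eq_iff_eq_mul, eq_mul_inv_iff_mul_eq.1 this]
  have mem_of_conj {b c : Perm α} (hbc : b * c = g) (hb : IsConj g b) (hc : IsConj g c) : b ∈ L :=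
    hL.mem_of_isConj hgL (sign_swap hx.symm) (by rwa [hz]) hbc hb hc
  have hbL : b ∈ L := mem_of_conj hbc hb hc
  have hbzL : z * b * z⁻¹ ∈ L :=
    mem_of_conj (c := z * c * z⁻¹) (by rw [_root_.conj_mul, hbc, hz])
      (hb.trans (isConj_iff.2 ⟨z, rfl⟩)) (hc.trans (isConj_iff.2 ⟨z, rfl⟩))
  refine ⟨_, mul_mem hbzL (inv_mem hbL), ?_⟩
  have : z * b * z⁻¹ * b⁻¹ = swap x (g x) * swap (b x) (b (g x)) := by
    rw [swap_apply_apply b]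
    simp only [z, swap_inv, mul_assoc]
  rw [this]
  exact cycleType_swap_mul_swap_of_nodup (hnodup x hx)

theorem swap_mul_swap_mul_mem (hL : FactorClosed (alternatingGroup α) L) {g : Perm α} (hg : g ∈ L)
    {x y : α} (h1 : Commute (swap x y) (swap (g x) (g y)))
    (h3 : Commute (swap x y) (swap ((g ^ 3) x) ((g ^ 3) y))) :
    swap x y * swap ((g ^ 2) x) ((g ^ 2) y) *
      (swap ((g ^ 4) x) ((g ^ 4) y) * swap ((g ^ 2) x) ((g ^ 2) y)) ∈ L := by
  obtain ⟨σ, hσ⟩ : ∃ σ : ℕ → Perm α, ∀ i, σ i = swap ((g ^ i) x) ((g ^ i) y) := ⟨_, fun _ => rfl⟩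
  have hσ0 : σ 0 = swap x y := by simp [hσ]
  have conj_σ (i j : ℕ) : g ^ i * σ j * (g ^ i)⁻¹ = σ (i + j) := by
    simp only [hσ, ← swap_apply_apply, pow_add, Perm.mul_apply]
  have conj_mul_σ (i j k : ℕ) : g ^ i * (σ j * σ k) * (g ^ i)⁻¹ = σ (i + j) * σ (i + k) := by
    rw [← _root_.conj_mul, conj_σ, conj_σ]
  have commute_σ (i : ℕ) : Commute (σ i) (σ (i + 1)) := by
    rw [← add_zero i, ← conj_σ i 0, add_zero, ← conj_σ i 1, hσ0, hσ 1, pow_one]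
    exact h1.conj _
  have mem_alternating (i : ℕ) : σ i * σ (i + 2) ∈ alternatingGroup α := by
    rw [add_comm, ← conj_σ 2 i, mem_alternatingGroup]
    simp
  have hconj : g * (σ 0 * σ 2) * g⁻¹ = σ 1 * σ 3 := by simpa using conj_mul_σ 1 0 2
  have hcomm : Commute (σ 0 * σ 2) (σ 1 * σ 3) :=
    ((commute_σ 0).mul_right (by rwa [hσ0, hσ])).mul_left
      ((commute_σ 1).symm.mul_right (commute_σ 2))
  have hmem := hL.commutatorElement_sq_mem hg (mem_alternating 0)
    (hconj ▸ mem_alternating 1) (hconj ▸ hcomm)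
  rw [← hσ0, ← hσ, ← hσ]
  convert hmem using 1
  calc σ 0 * σ 2 * (σ 4 * σ 2) = σ 0 * σ 2 * (σ 2 * σ 4)⁻¹ := by simp [hσ]
    _ = σ 0 * σ 2 * (g ^ 2 * (σ 0 * σ 2) * (g ^ 2)⁻¹)⁻¹ := by rw [conj_mul_σ]
    _ = ⁅σ 0 * σ 2, g ^ 2⁆ := by rw [commutatorElement_def]; group

theorem exists_cycleType_eq_two_two_mem_of_not_isCycle (hL : FactorClosed (alternatingGroup α) L)
    {p : ℕ} [hp : Fact p.Prime] (hp2 : p ≠ 2) {g : Perm α} (hgL : g ∈ L) (hgp : g ^ p = 1)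
    (hg1 : g ≠ 1) (hg : ¬ g.IsCycle) : ∃ t ∈ L, t.cycleType = {2, 2} := by
  obtain ⟨x, hx : g x ≠ x⟩ := DFunLike.ne_iff.1 hg1
  obtain ⟨y, hy, hxy⟩ : ∃ y, g y ≠ y ∧ ¬ g.SameCycle x y := by
    by_contra! h
    exact hg ⟨x, hx, h⟩
  have nodup {i : ℕ} (hi : ¬ p ∣ i) : [x, y, (g ^ i) x, (g ^ i) y].Nodup :=
    nodup_of_not_sameCycle hxy (mt (dvd_of_pow_apply_eq_self hgp hx) hi)
      (mt (dvd_of_pow_apply_eq_self hgp hy) hi)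
  have commute (i : ℕ) : Commute (swap x y) (swap ((g ^ i) x) ((g ^ i) y)) := by
    by_cases hi : p ∣ i
    · obtain ⟨k, rfl⟩ := hi
      simp [pow_mul, hgp]
    · exact (disjoint_swap_swap (nodup hi)).commute
  have hp4 : ¬ p ∣ 4 := fun h =>
    hp2 ((Nat.prime_dvd_prime_iff_eq hp.out Nat.prime_two).1 (hp.out.dvd_of_dvd_pow (n := 2) h))
  refine ⟨_, ?_, cycleType_swap_mul_swap_of_nodup (nodup hp4)⟩
  convert hL.swap_mul_swap_mul_mem hgL (by simpa using commute 1) (commute 3) using 1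
  have hcomm : Commute (swap ((g ^ 2) x) ((g ^ 2) y)) (swap ((g ^ 4) x) ((g ^ 4) y)) := by
    rw [show 4 = 2 + 2 from rfl, pow_add, Perm.mul_apply, Perm.mul_apply,
      swap_apply_apply _ x, swap_apply_apply _ ((g ^ 2) x)]
    exact (commute 2).conj _
  rw [← hcomm.eq]
  simp [mul_assoc]

theorem exists_isThreeCycle_mem_of_seven_le (hL : FactorClosed (alternatingGroup α) L) {p : ℕ}
    [Fact p.Prime] (hp7 : 7 ≤ p) {g : Perm α} (hgL : g ∈ L) (hgp : g ^ p = 1) (hg1 : g ≠ 1) :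
    ∃ t ∈ L, t.IsThreeCycle := by
  obtain ⟨x, hx : g x ≠ x⟩ := DFunLike.ne_iff.1 hg1
  have nodup {l : List ℕ} (hl : l.Nodup) (hlt : ∀ i ∈ l, i < 7) :
      (l.map fun i => (g ^ i) x).Nodup :=
    nodup_map_pow_apply hgp hx hl fun i hi => (hlt i hi).trans_le hp7
  have hmem := hL.swap_mul_swap_mul_mem hgL (x := x) (y := (g ^ 2) x)
    (disjoint_swap_swap (nodup (l := [0, 2, 1, 3]) (by decide) (by decide))).commute
    (disjoint_swap_swap (nodup (l := [0, 2, 3, 5]) (by decide) (by decide))).commute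
  have h0246 : [x, (g ^ 2) x, (g ^ 4) x, (g ^ 6) x].Nodup :=
    nodup (l := [0, 2, 4, 6]) (by decide) (by decide)
  simp only [← Perm.mul_apply, ← pow_add, Nat.reduceAdd] at hmem
  have hconj : swap ((g ^ 2) x) ((g ^ 4) x) * swap ((g ^ 4) x) ((g ^ 6) x) *
      swap ((g ^ 2) x) ((g ^ 4) x) = swap ((g ^ 2) x) ((g ^ 6) x) := by
    rw [swap_comm ((g ^ 2) x) ((g ^ 4) x), swap_comm ((g ^ 4) x) ((g ^ 6) x)]
    exact swap_mul_swap_mul_swap (by grind) (by grind)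
  rw [mul_assoc, ← mul_assoc (swap ((g ^ 2) x) _), hconj] at hmem
  refine ⟨_, hmem, ?_⟩
  rw [swap_comm x]
  exact isThreeCycle_swap_mul_swap_same (by grind) (by grind) (by grind)

theorem exists_isThreeCycle_mem_of_cycleType_eq_five (hL : FactorClosed (alternatingGroup α) L)
    {g : Perm α} (hgL : g ∈ L) (hg : g.cycleType = {5}) : ∃ t ∈ L, t.IsThreeCycle := by
  obtain ⟨ι, rfl⟩ := exists_viaEmbeddingHom_eq (σ := finRotate 5)
    (by simpa [← sum_cycleType, hg] using g.support.card_le_univ)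
    (cycleType_finRotate.trans hg.symm)
  set M := L.comap (viaEmbeddingHom ι)
  have hM : FactorClosed (alternatingGroup (Fin 5)) M := hL.comap_viaEmbeddingHom ι
  have hcM : finRotate 5 ∈ M := hgL
  let t : Perm (Fin 5) := swap 1 2 * swap 2 4
  -- The conjugator `i ↦ 2 * i` is a four-cycle, hence odd, and squares the rotation.
  have htc : (t * finRotate 5)⁻¹ ∈ M :=
    hM.mem_of_isConj hcM (z := swap 1 2 * swap 2 4 * swap 4 3) (c := t * finRotate 5 ^ 2)
      (by decide) (by convert pow_mem hcM 2 using 1; decide) (by decide)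
      (isConj_iff.2 ⟨swap 1 4 * swap 4 2, by decide⟩)
      (isConj_iff.2 ⟨swap 1 4 * swap 4 3, by decide⟩)
  have htM : t ∈ M := (M.mul_mem_cancel_right hcM).1 (inv_mem_iff.1 htc)
  refine ⟨_, htM, (cycleType_viaEmbeddingHom ι t).trans ?_⟩
  rw [show t = swap 2 1 * swap 2 4 by decide]
  exact isThreeCycle_swap_mul_swap_same (by decide) (by decide) (by decide)

theorem alternatingGroup_le (hL : FactorClosed (alternatingGroup α) L)
    (h6 : 6 ≤ Fintype.card α) (hle : L ≤ alternatingGroup α) (hne : L ≠ ⊥) :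
    alternatingGroup α ≤ L := by
  obtain ⟨p, hp, hpdvd⟩ := Nat.exists_prime_and_dvd (mt Subgroup.card_eq_one.1 hne)
  have : Fact p.Prime := ⟨hp⟩
  obtain ⟨⟨g, hgL⟩, hg⟩ := exists_prime_orderOf_dvd_card' p hpdvd
  rw [Subgroup.orderOf_mk] at hg
  have hgp : g ^ p = 1 := hg ▸ pow_orderOf_eq_one g
  have hg1 : g ≠ 1 := by
    rintro rfl
    exact hp.one_lt.ne (orderOf_one.symm.trans hg)
  suffices ∃ t ∈ L, t.IsThreeCycle ∨ t.cycleType = {2, 2} by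
    obtain ⟨t, htL, ht | ht⟩ := this
    · exact hL.alternatingGroup_le_of_isThreeCycle_mem ht htL
    · obtain ⟨t', ht'L, ht'⟩ := hL.exists_isThreeCycle_mem_of_cycleType_eq_two_two h6 htL ht
      exact hL.alternatingGroup_le_of_isThreeCycle_mem ht' ht'L
  obtain rfl | hp2 := eq_or_ne p 2
  · obtain ⟨t, htL, ht⟩ := hL.exists_cycleType_eq_two_two_mem_of_sq_eq_one hgL (hle hgL) hg1 hgp
    exact ⟨t, htL, .inr ht⟩
  by_cases hcycle : g.IsCycle
  · have hcard : g.cycleType = {p} := by rw [hcycle.cycleType, ← hcycle.orderOf, hg]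
    obtain hp7 | hp7 := le_or_gt 7 p
    · obtain ⟨t, htL, ht⟩ := hL.exists_isThreeCycle_mem_of_seven_le hp7 hgL hgp hg1
      exact ⟨t, htL, .inl ht⟩
    obtain rfl | rfl : p = 3 ∨ p = 5 := by
      have := hp.two_le
      interval_cases p <;> simp_all +decide
    · exact ⟨g, hgL, .inl hcard⟩
    · obtain ⟨t, htL, ht⟩ := hL.exists_isThreeCycle_mem_of_cycleType_eq_five hgL hcard
      exact ⟨t, htL, .inl ht⟩
  · obtain ⟨t, htL, ht⟩ := hL.exists_cycleType_eq_two_two_mem_of_not_isCycle hp2 hgL hgp hg1 hcycle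
    exact ⟨t, htL, .inr ht⟩

theorem eq_top {K : Subgroup (alternatingGroup α)} (hK : FactorClosed ⊤ K)
    (h6 : 6 ≤ Fintype.card α) (hne : K ≠ ⊥) : K = ⊤ := by
  have hinj := (alternatingGroup α).subtype_injective
  have hle := hK.map_subtype.alternatingGroup_le h6 (Subgroup.map_subtype_le K)
    (by rwa [Ne, Subgroup.map_eq_bot_iff_of_injective _ hinj])
  apply Subgroup.map_injective hinj
  rw [← MonoidHom.range_eq_map, Subgroup.range_subtype]
  exact le_antisymm (Subgroup.map_subtype_le K) hle

end FactorClosed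

theorem binary_action_alternatingGroup_orbit_trivial_or_regular_general {α Ω : Type*} [Fintype α]
    [DecidableEq α] (h6 : 6 ≤ Fintype.card α) [MulAction (alternatingGroup α) Ω]
    (h : IsBinary (alternatingGroup α) Ω) (ω : Ω) :
    orbit (alternatingGroup α) ω = {ω} ∨
      ∀ x ∈ orbit (alternatingGroup α) ω, stabilizer (alternatingGroup α) x = ⊥ := by
  by_cases hω : stabilizer (alternatingGroup α) ω = ⊥
  · right
    rintro _ ⟨g, rfl⟩
    change stabilizer _ (g • ω) = ⊥
    rw [stabilizer_smul_eq_stabilizer_map_conj, hω, Subgroup.map_bot]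
  · left
    obtain ⟨K, hKω, hne, hK⟩ := h.exists_factorClosed hω
    rw [hK.eq_top h6 hne, top_le_iff] at hKω
    refine Set.eq_singleton_iff_unique_mem.2 ⟨mem_orbit_self ω, ?_⟩
    rintro _ ⟨g, rfl⟩
    exact mem_stabilizer_iff.1 (hKω ▸ Subgroup.mem_top g)

/-- Theorem (binary actions of alternating groups): if `n ≥ 6` and `Aₙ` acts binarily on a
finite set `Ω`, then every orbit is a single point, or the stabilizer of every point of the
orbit is trivial. -/
theorem binary_action_alternatingGroup_orbit_trivial_or_regular
    (n : ℕ) (hn : 6 ≤ n) (Ω : Type*) [Fintype Ω]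
    [MulAction (alternatingGroup (Fin n)) Ω]
    (hbin : IsBinary (alternatingGroup (Fin n)) Ω) (ω : Ω) :
    MulAction.orbit (alternatingGroup (Fin n)) ω = {ω} ∨
      ∀ x ∈ MulAction.orbit (alternatingGroup (Fin n)) ω,
        MulAction.stabilizer (alternatingGroup (Fin n)) x = ⊥ :=
  binary_action_alternatingGroup_orbit_trivial_or_regular_general (by simpa using hn) hbin ω
end

section
/- Let G be a finite group acting transitively on a finite set Ω, and assume the action is binary. Let H be the stabilizer of a point of Ω, let p be a prime dividing |H|, and let C be a conjugacy class of elements of order p of G of maximal fixity. Then for any g ∈ C ∩ H, every vertex in the connected component of g in the graph Γ(C) lies in H. -/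
/-- The adjacency relation of the graph `Γ(C)` on a conjugacy class `C`: two distinct
vertices `x, y ∈ C` are joined when they commute and `x * y⁻¹ ∈ C` or `y * x⁻¹ ∈ C`. -/
def GammaAdj {G : Type*} [Group G] (C : Set G) (x y : G) : Prop :=
  x ≠ y ∧ x ∈ C ∧ y ∈ C ∧ Commute x y ∧ (x * y⁻¹ ∈ C ∨ y * x⁻¹ ∈ C)

section

open MulAction
open scoped Pointwise

variable {G Ω : Type*} [Group G] [MulAction G Ω] {p : ℕ} {C : Set G} {x y h : G}

/-- An element `x` of order `p` has *maximal fixity* on `Ω` if no element of order `p` has more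
fixed points. The requirement `orderOf x = p` is part of the definition. -/
def HasMaximalFixity (Ω : Type*) [MulAction G Ω] (p : ℕ) (x : G) : Prop :=
  orderOf x = p ∧
    ∀ w : G, orderOf w = p → Nat.card (fixedBy Ω w) ≤ Nat.card (fixedBy Ω x)

theorem card_fixedBy_eq_of_isConj (hxy : IsConj x y) :
    Nat.card (fixedBy Ω x) = Nat.card (fixedBy Ω y) := by
  obtain ⟨k, rfl⟩ := isConj_iff.1 hxy
  rw [← smul_fixedBy]
  exact (Set.ncard_smul_set k (fixedBy Ω x)).symm

theorem HasMaximalFixity.of_isConj (hx : HasMaximalFixity Ω p x) (hxy : IsConj x y) :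
    HasMaximalFixity Ω p y := by
  have horder : orderOf x = orderOf y := hxy.elim fun _ hk => hk.orderOf_eq _
  exact ⟨horder.symm.trans hx.1, card_fixedBy_eq_of_isConj (Ω := Ω) hxy ▸ hx.2⟩

theorem HasMaximalFixity.fixedBy_eq_of_subset [Finite Ω] (hx : HasMaximalFixity Ω p x)
    (hh : orderOf h ≠ 0) (hdvd : p ∣ orderOf h) (hsub : fixedBy Ω x ⊆ fixedBy Ω h) :
    fixedBy Ω x = fixedBy Ω h := by
  set w := h ^ (orderOf h / p)
  have hhw : fixedBy Ω h ⊆ fixedBy Ω w := fun a ha => (stabilizer G a).pow_mem ha _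
  have hxw : fixedBy Ω x = fixedBy Ω w :=
    (Set.toFinite _).eq_of_subset_of_card_le (hsub.trans hhw)
      (hx.2 w (orderOf_pow_orderOf_div hh hdvd))
  exact hsub.antisymm (hxw ▸ hhw)

theorem pow_smul_eq_pow_smul_of_mapsTo {M α : Type*} [Monoid M] [MulAction M α] {m k : M}
    {s : Set α} (hmaps : Set.MapsTo (k • ·) s s) (hmk : ∀ a ∈ s, m • a = k • a) (n : ℕ) :
    ∀ a ∈ s, m ^ n • a = k ^ n • a := by
  induction n with
  | zero => simp only [pow_zero, implies_true]
  | succ n ih =>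
    intro a ha
    rw [pow_succ, mul_smul, hmk a ha, ih _ (hmaps ha), pow_succ, mul_smul]

theorem smul_eq_self_of_pow_smul_eq_self {M α : Type*} [Monoid M] [MulAction M α] {m : M}
    {n : ℕ} {a : α} (hn : n.Coprime (orderOf m)) (ha : m ^ n • a = a) : m • a = a := by
  obtain ⟨k, hk⟩ := exists_pow_eq_self_of_coprime hn
  rw [← hk]
  exact (stabilizerSubmonoid M a).pow_mem ha k

theorem IsBinary.exists_smul_eq_of_pairwise [Finite Ω] (hbin : IsBinary G Ω) {s : Set Ω}
    {f : Ω → Ω} (hf : ∀ a ∈ s, ∀ b ∈ s, ∃ g : G, g • a = f a ∧ g • b = f b) :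
    ∃ g : G, ∀ a ∈ s, g • a = f a := by
  obtain ⟨n, ⟨e⟩⟩ := Finite.exists_equiv_fin s
  obtain ⟨g, hg⟩ := hbin n (fun i => e.symm i) (fun i => f (e.symm i))
    fun i j => hf _ (e.symm i).2 _ (e.symm j).2
  exact ⟨g, fun a ha => by simpa only [e.symm_apply_apply] using hg (e ⟨a, ha⟩)⟩

theorem mem_fixedBy_inv_mul {a : Ω} : a ∈ fixedBy Ω (y⁻¹ * x) ↔ x • a = y • a := by
  rw [mem_fixedBy, mul_smul, inv_smul_eq_iff]

theorem IsBinary.exists_fixedBy_subset_and_smul_eq [Finite Ω] (hbin : IsBinary G Ω) (x y : G) :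
    ∃ h : G, fixedBy Ω x ⊆ fixedBy Ω h ∧ fixedBy Ω y ⊆ fixedBy Ω h ∧
      ∀ a ∈ fixedBy Ω (y⁻¹ * x), h • a = y • a := by
  classical
  let f : Ω → Ω := fun a => if x • a = y • a then y • a else a
  have f_of_eq {a : Ω} (ha : x • a = y • a) : f a = y • a := if_pos ha
  have f_of_ne {a : Ω} (ha : x • a ≠ y • a) : f a = a := if_neg ha
  have f_of_fixed {a : Ω} (ha : x • a = a ∨ y • a = a) : f a = a := by grind
  let s : Set Ω := {a | (x • a = a ∨ y • a = a) ∨ x • a = y • a}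
  have hpair : ∀ a ∈ s, ∀ b ∈ s, ∃ g : G, g • a = f a ∧ g • b = f b := by
    have mixed {a b : Ω} (ha : x • a = y • a) (hb : x • b = b ∨ y • b = b) :
        ∃ g : G, g • a = f a ∧ g • b = f b := by
      rcases hb with hxb | hyb
      · exact ⟨x, ha.trans (f_of_eq ha).symm, hxb.trans (f_of_fixed (.inl hxb)).symm⟩
      · exact ⟨y, (f_of_eq ha).symm, hyb.trans (f_of_fixed (.inr hyb)).symm⟩
    rintro a (ha | ha) b (hb | hb)
    · exact ⟨1, by rw [one_smul, f_of_fixed ha], by rw [one_smul, f_of_fixed hb]⟩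
    · obtain ⟨g, hgb, hga⟩ := mixed hb ha
      exact ⟨g, hga, hgb⟩
    · exact mixed ha hb
    · exact ⟨y, (f_of_eq ha).symm, (f_of_eq hb).symm⟩
  obtain ⟨h, hh⟩ := hbin.exists_smul_eq_of_pairwise hpair
  refine ⟨h, fun a ha => ?_, fun a ha => ?_, fun a ha => ?_⟩
  · exact (hh a (.inl (.inl ha))).trans (f_of_fixed (.inl ha))
  · exact (hh a (.inl (.inr ha))).trans (f_of_fixed (.inr ha))
  · have hxy := mem_fixedBy_inv_mul.1 ha
    exact (hh a (.inr hxy)).trans (f_of_eq hxy)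

theorem fixedBy_subset_fixedBy_of_coprime_orderOf {z : G} (hyz : Commute z y) (hy : y ^ p = 1)
    (hcop : p.Coprime (orderOf h)) (hh : ∀ a ∈ fixedBy Ω z, h • a = y • a) :
    fixedBy Ω z ⊆ fixedBy Ω y := by
  intro a ha
  have hmaps : Set.MapsTo (y • ·) (fixedBy Ω z) (fixedBy Ω z) := fun _ =>
    (smul_mem_of_set_mem_fixedBy (fixedBy_mem_fixedBy_of_commute hyz)).2
  have hpow : h ^ p • a = a := by
    rw [pow_smul_eq_pow_smul_of_mapsTo hmaps hh p a ha, hy, one_smul]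
  exact (hh a ha).symm.trans (smul_eq_self_of_pow_smul_eq_self hcop hpow)

theorem IsBinary.fixedBy_eq_of_commute [Finite Ω] (hbin : IsBinary G Ω) (hG : IsMulTorsion G)
    (hp : p.Prime) (hxy : Commute x y) (hx : HasMaximalFixity Ω p x)
    (hy : HasMaximalFixity Ω p y) (hz : HasMaximalFixity Ω p (y⁻¹ * x)) :
    fixedBy Ω x = fixedBy Ω y := by
  obtain ⟨h, hxh, hyh, hzh⟩ := hbin.exists_fixedBy_subset_and_smul_eq x y
  by_cases hdvd : p ∣ orderOf h
  · have hh : orderOf h ≠ 0 := (hG h).orderOf_pos.ne'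
    exact (hx.fixedBy_eq_of_subset hh hdvd hxh).trans
      (hy.fixedBy_eq_of_subset hh hdvd hyh).symm
  · have hzy : fixedBy Ω (y⁻¹ * x) ⊆ fixedBy Ω y :=
      fixedBy_subset_fixedBy_of_coprime_orderOf ((Commute.refl y).inv_left.mul_left hxy)
        (hy.1 ▸ pow_orderOf_eq_one y) (hp.coprime_iff_not_dvd.2 hdvd) hzh
    have hzy_eq : fixedBy Ω (y⁻¹ * x) = fixedBy Ω y :=
      hz.fixedBy_eq_of_subset (hG y).orderOf_pos.ne' hy.1.symm.dvd hzy
    have hyx : fixedBy Ω y ⊆ fixedBy Ω x := fun a ha =>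
      (mem_fixedBy_inv_mul.1 (hzy_eq.symm ▸ ha)).trans ha
    exact (hy.fixedBy_eq_of_subset (hG x).orderOf_pos.ne' hx.1.symm.dvd hyx).symm

theorem GammaAdj.fixedBy_eq [Finite Ω] (hxy : GammaAdj C x y) (hbin : IsBinary G Ω)
    (hG : IsMulTorsion G) (hp : p.Prime) (hC : ∀ w ∈ C, HasMaximalFixity Ω p w) :
    fixedBy Ω x = fixedBy Ω y := by
  obtain ⟨-, hx, hy, hcomm, hz | hz⟩ := hxy
  · rw [hcomm.inv_right.eq] at hz
    exact hbin.fixedBy_eq_of_commute hG hp hcomm (hC x hx) (hC y hy) (hC _ hz)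
  · rw [hcomm.symm.inv_right.eq] at hz
    exact (hbin.fixedBy_eq_of_commute hG hp hcomm.symm (hC y hy) (hC x hx) (hC _ hz)).symm

theorem component_of_graph_in_stabilizer_general [Finite Ω] (hbin : IsBinary G Ω)
    (hG : IsMulTorsion G) (hp : p.Prime) (hC : ∀ x ∈ C, HasMaximalFixity Ω p x) {g v : G}
    (hgv : Relation.ReflTransGen (GammaAdj C) g v) : fixedBy Ω g = fixedBy Ω v := by
  induction hgv with
  | refl => rfl
  | tail _ hadj ih => exact ih.trans (hadj.fixedBy_eq hbin hG hp hC)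

end

/-- Lemma: let `G` act transitively and binarily on a finite set `Ω`, let `H` be the
stabilizer of a point, let `p` be a prime dividing `|H|`, and let `C` be a conjugacy class
of elements of order `p` of maximal fixity. Then for any `g ∈ C ∩ H`, every vertex in the
connected component of `g` in `Γ(C)` lies in `H`. -/
theorem component_of_graph_in_stabilizer
    (G Ω : Type*) [Group G] [Finite G] [Fintype Ω] [MulAction G Ω]
    [MulAction.IsPretransitive G Ω]
    (hbin : IsBinary G Ω)
    (ω₀ : Ω) (H : Subgroup G) (hH : H = MulAction.stabilizer G ω₀)
    (p : ℕ) (hp : p.Prime) (hpH : p ∣ Nat.card H)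
    (c : G) (hc : orderOf c = p)
    (C : Set G) (hC : C = {x : G | IsConj c x})
    (hmax : ∀ x : G, orderOf x = p →
      Nat.card ↥(MulAction.fixedBy Ω x) ≤ Nat.card ↥(MulAction.fixedBy Ω c))
    (g : G) (hgC : g ∈ C) (hgH : g ∈ H) :
    ∀ v : G, Relation.ReflTransGen (GammaAdj C) g v → v ∈ H := by
  subst hH hC
  exact fun v hgv => (component_of_graph_in_stabilizer_general hbin isMulTorsion_of_finite hp
    (fun _ hx => HasMaximalFixity.of_isConj ⟨hc, hmax⟩ hx) hgv).subset hgH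
end

section
/- Let G be a finite group acting on a finite set Ω. The following conditions are equivalent: (1) there exist triples I, J ∈ Ω³ such that I and J are 2-related but not 3-related; (2) there exist points α₁, α₂, α₃ ∈ Ω with stabilizers H₁, H₂, H₃ respectively, and elements h_i ∈ H_i for i = 1, 2, 3, satisfying h₁h₂h₃ = 1 and such that there do NOT exist h₂' ∈ H₂ ∩ H₁ and h₃' ∈ H₃ ∩ H₁ with h₁h₂'h₃' = 1; (3) there exist points α₁, α₂, α₃ ∈ Ω with stabilizers H₁, H₂, H₃ such that the set H₁ ∩ (H₂·H₃) is not contained in H₁ ∩ ((H₁ ∩ H₂)·H₃), where A·B denotes the set of products {ab : a ∈ A, b ∈ B}. Moreover, when these conditions hold, the action of G on Ω is not binary. -/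
/-!
All three conditions say that for some triple of points, with stabilizers `H₁, H₂, H₃`, the
inclusion `H₁ ∩ H₂H₃ ⊆ (H₂ ∩ H₁)(H₃ ∩ H₁)` fails. For (2) this is a matter of inverting `h₁`, and
for (3) it is Dedekind's modular law. For (1), let `gₖ` map `I` to `J` except possibly at the
`k`-th entry. Then `g₂⁻¹g₁ = (g₂⁻¹g₀)(g₀⁻¹g₁)` lies in `H₁ ∩ H₂H₃`, and if it equals `xy` with
`x ∈ H₂ ∩ H₁` and `y ∈ H₃ ∩ H₁`, then `g₂x = g₁y⁻¹` maps `I` to `J`. Conversely, an element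
`xy ∈ H₁ ∩ H₂H₃` makes `(α₁, α₂, α₃)` and `(α₁, y⁻¹α₂, α₃)` 2-related, and any `g` that maps the
first to the second gives the factorization `xy = (xyg)g⁻¹` inside `H₁`.
-/

open Pointwise

/-- Tuples `I, J ∈ Ωⁿ` are `r`-related if for every choice of `r` indices there is an
element of `G` mapping the corresponding entries of `I` to those of `J`. -/
def IsRelated (G : Type*) {Ω : Type*} [Group G] [MulAction G Ω] {n : ℕ} (r : ℕ)
    (I J : Fin n → Ω) : Prop :=
  ∀ s : Finset (Fin n), s.card = r → ∃ g : G, ∀ i ∈ s, g • I i = J i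

/-- Condition (1): there are triples that are 2-related but not 3-related. -/
def Cond1 (G Ω : Type*) [Group G] [MulAction G Ω] : Prop :=
  ∃ I J : Fin 3 → Ω, IsRelated G 2 I J ∧ ¬ IsRelated G 3 I J

/-- Condition (2): there are points `α₁, α₂, α₃` with stabilizers `H₁, H₂, H₃`, and
`hᵢ ∈ Hᵢ` with `h₁h₂h₃ = 1`, such that there are no `h₂' ∈ H₂ ∩ H₁` and `h₃' ∈ H₃ ∩ H₁`
with `h₁h₂'h₃' = 1`. -/
def Cond2 (G Ω : Type*) [Group G] [MulAction G Ω] : Prop :=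
  ∃ α₁ α₂ α₃ : Ω,
    ∃ h₁ ∈ MulAction.stabilizer G α₁, ∃ h₂ ∈ MulAction.stabilizer G α₂,
      ∃ h₃ ∈ MulAction.stabilizer G α₃,
        h₁ * h₂ * h₃ = 1 ∧
        ¬ ∃ h₂' ∈ MulAction.stabilizer G α₂ ⊓ MulAction.stabilizer G α₁,
            ∃ h₃' ∈ MulAction.stabilizer G α₃ ⊓ MulAction.stabilizer G α₁,
              h₁ * h₂' * h₃' = 1

/-- Condition (3): there are points `α₁, α₂, α₃` with stabilizers `H₁, H₂, H₃` such that
`H₁ ∩ H₂·H₃` is not contained in `H₁ ∩ (H₁ ∩ H₂)·H₃`. -/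
def Cond3 (G Ω : Type*) [Group G] [MulAction G Ω] : Prop :=
  ∃ α₁ α₂ α₃ : Ω,
    ¬ ((MulAction.stabilizer G α₁ : Set G) ∩
        ((MulAction.stabilizer G α₂ : Set G) * (MulAction.stabilizer G α₃ : Set G)) ⊆
       (MulAction.stabilizer G α₁ : Set G) ∩
        (((MulAction.stabilizer G α₁ : Set G) ∩ (MulAction.stabilizer G α₂ : Set G)) *
          (MulAction.stabilizer G α₃ : Set G)))

open MulAction

section Subgroups

variable {G : Type*} [Group G]

/-- Intersecting with `H₁` distributes over the product set `H₂ · H₃`. Only the nontrivial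
inclusion is recorded. Conditions (1), (2) and (3) each assert its failure for the stabilizers of
three points. -/
def InterDistribMul (H₁ H₂ H₃ : Subgroup G) : Prop :=
  (H₁ : Set G) ∩ ((H₂ : Set G) * (H₃ : Set G)) ⊆
    ((H₂ ⊓ H₁ : Subgroup G) : Set G) * ((H₃ ⊓ H₁ : Subgroup G) : Set G)

lemma inv_mem_mul_iff_exists_mul_mul_eq_one {A B : Set G} {h : G} :
    h⁻¹ ∈ A * B ↔ ∃ a ∈ A, ∃ b ∈ B, h * a * b = 1 := by
  simp only [Set.mem_mul, mul_assoc, mul_eq_one_iff_inv_eq, eq_comm]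

lemma not_interDistribMul_iff_exists_mul_mul_eq_one {H₁ H₂ H₃ : Subgroup G} :
    ¬ InterDistribMul H₁ H₂ H₃ ↔
      ∃ h₁ ∈ H₁, ∃ h₂ ∈ H₂, ∃ h₃ ∈ H₃, h₁ * h₂ * h₃ = 1 ∧
        ¬ ∃ h₂' ∈ H₂ ⊓ H₁, ∃ h₃' ∈ H₃ ⊓ H₁, h₁ * h₂' * h₃' = 1 := by
  constructor
  · intro h
    obtain ⟨g, ⟨hg₁, hg⟩, hg'⟩ := Set.not_subset.mp h
    rw [← inv_inv g] at hg hg'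
    obtain ⟨h₂, hh₂, h₃, hh₃, hmul⟩ := inv_mem_mul_iff_exists_mul_mul_eq_one.mp hg
    exact ⟨g⁻¹, inv_mem hg₁, h₂, hh₂, h₃, hh₃, hmul,
      mt inv_mem_mul_iff_exists_mul_mul_eq_one.mpr hg'⟩
  · rintro ⟨h₁, hh₁, h₂, hh₂, h₃, hh₃, hmul, hnot⟩ hdistrib
    exact hnot (inv_mem_mul_iff_exists_mul_mul_eq_one.mp (hdistrib ⟨inv_mem hh₁,
      inv_mem_mul_iff_exists_mul_mul_eq_one.mpr ⟨h₂, hh₂, h₃, hh₃, hmul⟩⟩))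

lemma interDistribMul_iff_inter_subset {H₁ H₂ H₃ : Subgroup G} :
    InterDistribMul H₁ H₂ H₃ ↔
      (H₁ : Set G) ∩ ((H₂ : Set G) * (H₃ : Set G)) ⊆
        (H₁ : Set G) ∩ (((H₁ : Set G) ∩ (H₂ : Set G)) * (H₃ : Set G)) := by
  have dedekind := Subgroup.mul_inf_assoc (H₂ ⊓ H₁) H₃ H₁ inf_le_right
  rw [InterDistribMul, dedekind, Subgroup.coe_inf, Set.inter_comm (H₂ : Set G),
    Set.inter_comm _ (H₁ : Set G)]

end Subgroups

section Related

variable {G Ω : Type*} [Group G] [MulAction G Ω] {n : ℕ}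

lemma isRelated_length_iff {I J : Fin n → Ω} : IsRelated G n I J ↔ ∃ g : G, ∀ i, g • I i = J i := by
  constructor
  · intro h
    obtain ⟨g, hg⟩ := h Finset.univ (Finset.card_fin n)
    exact ⟨g, fun i => hg i (Finset.mem_univ i)⟩
  · rintro ⟨g, hg⟩ s -
    exact ⟨g, fun i _ => hg i⟩

lemma isRelated_iff_forall_ne {I J : Fin (n + 1) → Ω} :
    IsRelated G n I J ↔ ∀ k, ∃ g : G, ∀ i ≠ k, g • I i = J i := by
  constructor
  · intro h k
    obtain ⟨g, hg⟩ := h {k}ᶜ (by simp [Finset.card_compl])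
    exact ⟨g, fun i hi => hg i (by simpa using hi)⟩
  · intro h s hs
    obtain ⟨k, hk⟩ : ∃ k, sᶜ = {k} := Finset.card_eq_one.mp (by simp [Finset.card_compl, hs])
    obtain ⟨g, hg⟩ := h k
    refine ⟨g, fun i hi => hg i ?_⟩
    rintro rfl
    exact Finset.mem_compl.mp (hk ▸ Finset.mem_singleton_self i) hi

lemma IsRelated.exists_smul_eq_and_smul_eq [Nontrivial (Fin n)] {I J : Fin n → Ω}
    (h : IsRelated G 2 I J) (i j : Fin n) : ∃ g : G, g • I i = J i ∧ g • I j = J j := by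
  rcases eq_or_ne i j with rfl | hij
  · obtain ⟨k, hk⟩ := exists_ne i
    obtain ⟨g, hg⟩ := h {i, k} (Finset.card_pair hk.symm)
    exact ⟨g, hg i (by simp), hg i (by simp)⟩
  · obtain ⟨g, hg⟩ := h {i, j} (Finset.card_pair hij)
    exact ⟨g, hg i (by simp), hg j (by simp)⟩

lemma IsBinary.isRelated_length [Nontrivial (Fin n)] (hbin : IsBinary G Ω) {I J : Fin n → Ω}
    (h : IsRelated G 2 I J) : IsRelated G n I J :=
  isRelated_length_iff.mpr (hbin n I J h.exists_smul_eq_and_smul_eq)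

lemma inv_mul_mem_stabilizer_iff {a b : G} {α : Ω} :
    a⁻¹ * b ∈ stabilizer G α ↔ b • α = a • α := by
  rw [mem_stabilizer_iff, mul_smul, inv_smul_eq_iff]

end Related

section Triples

variable {G Ω : Type*} [Group G] [MulAction G Ω] {I J : Fin 3 → Ω}

lemma IsRelated.three_of_interDistribMul
    (hI : InterDistribMul (stabilizer G (I 0)) (stabilizer G (I 1)) (stabilizer G (I 2)))
    (h : IsRelated G 2 I J) : IsRelated G 3 I J := by
  choose g hg using isRelated_iff_forall_ne.mp h
  have quotient_mem (k l i : Fin 3) (hk : i ≠ k) (hl : i ≠ l) :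
      (g k)⁻¹ * g l ∈ stabilizer G (I i) :=
    inv_mul_mem_stabilizer_iff.mpr ((hg l i hl).trans (hg k i hk).symm)
  obtain ⟨x, ⟨hx₁, hx₀⟩, y, ⟨hy₂, -⟩, hxy : x * y = (g 2)⁻¹ * g 1⟩ :=
    hI ⟨quotient_mem 2 1 0 (by decide) (by decide),
      (g 2)⁻¹ * g 0, quotient_mem 2 0 1 (by decide) (by decide),
      (g 0)⁻¹ * g 1, quotient_mem 0 1 2 (by decide) (by decide), by group⟩
  have hgxy : g 2 * x = g 1 * y⁻¹ := by
    rw [eq_mul_inv_iff_mul_eq, mul_assoc, hxy, mul_inv_cancel_left]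
  have h₀ : (g 2 * x) • I 0 = J 0 := by
    rw [mul_smul, mem_stabilizer_iff.mp hx₀, hg 2 0 (by decide)]
  have h₁ : (g 2 * x) • I 1 = J 1 := by
    rw [mul_smul, mem_stabilizer_iff.mp hx₁, hg 2 1 (by decide)]
  have h₂ : (g 2 * x) • I 2 = J 2 := by
    rw [hgxy, mul_smul, mem_stabilizer_iff.mp (inv_mem hy₂), hg 1 2 (by decide)]
  exact isRelated_length_iff.mpr ⟨g 2 * x, by simp [Fin.forall_fin_succ, h₀, h₁, h₂]⟩

lemma isRelated_two_update_inv_smul {x y : G} (hxy : x * y ∈ stabilizer G (I 0))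
    (hx : x ∈ stabilizer G (I 1)) (hy : y ∈ stabilizer G (I 2)) :
    IsRelated G 2 I (Function.update I 1 (y⁻¹ • I 1)) := by
  have hxy' : (x * y)⁻¹ • I 1 = y⁻¹ • I 1 := by
    rw [mul_inv_rev, mul_smul, mem_stabilizer_iff.mp (inv_mem hx)]
  have hxy_inv := mem_stabilizer_iff.mp (inv_mem hxy)
  have hy_inv := mem_stabilizer_iff.mp (inv_mem hy)
  refine isRelated_iff_forall_ne.mpr fun k => ?_
  fin_cases k
  · exact ⟨y⁻¹, by simp [Fin.forall_fin_succ, hy_inv]⟩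
  · exact ⟨1, by simp +contextual⟩
  · exact ⟨(x * y)⁻¹, by simp [Fin.forall_fin_succ, hxy_inv, hxy', -mul_inv_rev]⟩

lemma interDistribMul_stabilizer_of_isRelated_three
    (h : ∀ J, IsRelated G 2 I J → IsRelated G 3 I J) :
    InterDistribMul (stabilizer G (I 0)) (stabilizer G (I 1)) (stabilizer G (I 2)) := by
  rintro _ ⟨hxy : _ ∈ stabilizer G (I 0), x, hx, y, hy, rfl⟩
  obtain ⟨g, hg⟩ := isRelated_length_iff.mp (h _ (isRelated_two_update_inv_smul hxy hx hy))
  have hg₀ : g ∈ stabilizer G (I 0) := mem_stabilizer_iff.mpr (hg 0)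
  have hg₁ : g • I 1 = y⁻¹ • I 1 := hg 1
  have hg₂ : g ∈ stabilizer G (I 2) := mem_stabilizer_iff.mpr (hg 2)
  have hxyg : x * y * g ∈ stabilizer G (I 1) := by
    rw [mem_stabilizer_iff, mul_smul, hg₁, mul_smul, smul_inv_smul, mem_stabilizer_iff.mp hx]
  exact ⟨x * y * g, ⟨hxyg, mul_mem hxy hg₀⟩, g⁻¹, inv_mem (Subgroup.mem_inf.mpr ⟨hg₂, hg₀⟩),
    mul_inv_cancel_right _ _⟩

lemma not_interDistribMul_stabilizer_iff :
    ¬ InterDistribMul (stabilizer G (I 0)) (stabilizer G (I 1)) (stabilizer G (I 2)) ↔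
      ∃ J, IsRelated G 2 I J ∧ ¬ IsRelated G 3 I J := by
  constructor
  · contrapose!
    exact interDistribMul_stabilizer_of_isRelated_three
  · rintro ⟨J, h₂, h₃⟩ hI
    exact h₃ (h₂.three_of_interDistribMul hI)

end Triples

section Criteria

variable {G Ω : Type*} [Group G] [MulAction G Ω]

lemma cond1_iff_cond2 : Cond1 G Ω ↔ Cond2 G Ω := by
  simp only [Cond1, Cond2, ← not_interDistribMul_stabilizer_iff,
    ← not_interDistribMul_iff_exists_mul_mul_eq_one]
  exact ⟨fun ⟨I, hI⟩ => ⟨I 0, I 1, I 2, hI⟩, fun ⟨α₁, α₂, α₃, h⟩ => ⟨![α₁, α₂, α₃], h⟩⟩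

lemma cond2_iff_cond3 : Cond2 G Ω ↔ Cond3 G Ω := by
  simp only [Cond2, Cond3, ← not_interDistribMul_iff_exists_mul_mul_eq_one,
    ← interDistribMul_iff_inter_subset]

lemma Cond1.not_isBinary : Cond1 G Ω → ¬ IsBinary G Ω := by
  rintro ⟨I, J, h₂, h₃⟩ hbin
  exact h₃ (hbin.isRelated_length h₂)

end Criteria

theorem basic_criteria_general (G Ω : Type*) [Group G] [MulAction G Ω] :
    (Cond1 G Ω ↔ Cond2 G Ω) ∧ (Cond2 G Ω ↔ Cond3 G Ω) ∧
    (Cond1 G Ω → ¬ IsBinary G Ω) :=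
  ⟨cond1_iff_cond2, cond2_iff_cond3, Cond1.not_isBinary⟩

/-- Lemma (basic criteria): conditions (1), (2), (3) are equivalent, and when they hold the
action of `G` on `Ω` is not binary. -/
theorem basic_criteria (G Ω : Type*) [Group G] [Finite G] [Fintype Ω] [MulAction G Ω] :
    (Cond1 G Ω ↔ Cond2 G Ω) ∧ (Cond2 G Ω ↔ Cond3 G Ω) ∧
    (Cond1 G Ω → ¬ IsBinary G Ω) :=
  basic_criteria_general G Ω
end

section
/- Let a finite group G act on the disjoint union X ⊔ Y of nonempty finite G-sets X and Y, where the action of G on X is free (i.e., only the identity element of G fixes a point of X). Then RC(G, X ⊔ Y) = RC(G, Y). -/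
/-- The relational complexity `RC(G, Ω)`: the least `k ≥ 2` such that for every `n ≥ k`,
any two `k`-related `n`-tuples are in the same `G`-orbit (entrywise). -/
noncomputable def RC (G Ω : Type*) [Group G] [MulAction G Ω] : ℕ :=
  sInf {k : ℕ | 2 ≤ k ∧ ∀ n : ℕ, k ≤ n → ∀ I J : Fin n → Ω,
    IsRelated G k I J → ∃ g : G, ∀ i, g • I i = J i}

/-- The natural action of `G` on the disjoint union of two `G`-sets. -/
instance Sum.instMulActionDisjointUnion {G X Y : Type*} [Group G] [MulAction G X]
    [MulAction G Y] : MulAction G (X ⊕ Y) where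
  smul g p := p.map (fun x => g • x) (fun y => g • y)
  one_smul p := by cases p <;> show Sum.map _ _ _ = _ <;> simp
  mul_smul g h p := by cases p <;> show Sum.map _ _ _ = _ <;> simp [Sum.map, mul_smul]

section

variable {G Ω Ω' : Type*} [Group G] [MulAction G Ω] [MulAction G Ω']

/-- The action of `G` on `Ω` is `k`-ary if any two `k`-related tuples of length at least `k` lie in
the same `G`-orbit; `RC G Ω` is the least `k ≥ 2` with this property. -/
def IsKAry (G Ω : Type*) [Group G] [MulAction G Ω] (k : ℕ) : Prop :=
  ∀ n : ℕ, k ≤ n → ∀ I J : Fin n → Ω, IsRelated G k I J → ∃ g : G, ∀ i, g • I i = J i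

lemma RC_eq_of_isKAry_iff (h : ∀ k, 2 ≤ k → (IsKAry G Ω k ↔ IsKAry G Ω' k)) :
    RC G Ω = RC G Ω' :=
  congrArg sInf <| Set.ext fun k => and_congr_right (h k)

lemma IsRelated.exists_of_card_le {n r : ℕ} {I J : Fin n → Ω} (h : IsRelated G r I J)
    (hrn : r ≤ n) {s : Finset (Fin n)} (hs : s.card ≤ r) : ∃ g : G, ∀ i ∈ s, g • I i = J i := by
  obtain ⟨t, hst, ht⟩ := Finset.exists_superset_card_eq hs (by simpa using hrn)
  obtain ⟨g, hg⟩ := h t ht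
  exact ⟨g, fun i hi => hg i (hst hi)⟩

lemma IsRelated.exists_smul_eq {n r : ℕ} {I J : Fin n → Ω} (h : IsRelated G r I J)
    (hr : 1 ≤ r) (hrn : r ≤ n) (i : Fin n) : ∃ g : G, g • I i = J i := by
  simpa using h.exists_of_card_le hrn (s := {i}) (by simpa using hr)

lemma IsRelated.exists_smul_eq_pair {n r : ℕ} {I J : Fin n → Ω} (h : IsRelated G r I J)
    (hr : 2 ≤ r) (hrn : r ≤ n) (i j : Fin n) : ∃ g : G, g • I i = J i ∧ g • I j = J j := by
  simpa using h.exists_of_card_le hrn (Finset.card_le_two.trans hr : ({i, j} : Finset _).card ≤ r)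

lemma smul_left_injective_of_stabilizer_eq_bot {a : Ω} (ha : MulAction.stabilizer G a = ⊥) :
    Function.Injective (fun g : G => g • a) := by
  intro g g' (h : g • a = g' • a)
  have hmem : g'⁻¹ * g ∈ MulAction.stabilizer G a := by
    rw [MulAction.mem_stabilizer_iff, mul_smul, h, inv_smul_smul]
  rw [ha, Subgroup.mem_bot, inv_mul_eq_one] at hmem
  exact hmem.symm

lemma IsRelated.exists_forall_smul_eq_of_stabilizer_eq_bot {n r : ℕ} {I J : Fin n → Ω}
    (h : IsRelated G r I J) (hr : 2 ≤ r) (hrn : r ≤ n) {i : Fin n}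
    (hi : MulAction.stabilizer G (I i) = ⊥) : ∃ g : G, ∀ j, g • I j = J j := by
  obtain ⟨g, hg⟩ := h.exists_smul_eq (one_le_two.trans hr) hrn i
  refine ⟨g, fun j => ?_⟩
  obtain ⟨g', hg'i, hg'j⟩ := h.exists_smul_eq_pair hr hrn i j
  have hgg' : g = g' := smul_left_injective_of_stabilizer_eq_bot hi (hg.trans hg'i.symm)
  rwa [hgg']

lemma smul_map_eq_map_iff {f : Ω →[G] Ω'} (hf : Function.Injective f) {g : G} {a b : Ω} :
    g • f a = f b ↔ g • a = b := by
  rw [← map_smul, hf.eq_iff]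

lemma isRelated_comp_iff {f : Ω →[G] Ω'} (hf : Function.Injective f) {n r : ℕ}
    {I J : Fin n → Ω} : IsRelated G r (f ∘ I) (f ∘ J) ↔ IsRelated G r I J := by
  simp only [IsRelated, Function.comp_apply, smul_map_eq_map_iff hf]

lemma IsKAry.of_injective {f : Ω →[G] Ω'} (hf : Function.Injective f) {k : ℕ}
    (h : IsKAry G Ω' k) : IsKAry G Ω k := by
  intro n hn I J hIJ
  obtain ⟨g, hg⟩ := h n hn (f ∘ I) (f ∘ J) ((isRelated_comp_iff hf).2 hIJ)
  exact ⟨g, fun i => (smul_map_eq_map_iff hf).1 (hg i)⟩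

lemma IsRelated.exists_eq_comp {f : Ω →[G] Ω'} {n r : ℕ} {I : Fin n → Ω} {J : Fin n → Ω'}
    (h : IsRelated G r (f ∘ I) J) (hr : 1 ≤ r) (hrn : r ≤ n) : ∃ J' : Fin n → Ω, J = f ∘ J' := by
  have mem_range (i : Fin n) : ∃ b, J i = f b := by
    obtain ⟨g, hg⟩ := h.exists_smul_eq hr hrn i
    exact ⟨g • I i, by rw [map_smul, ← hg, Function.comp_apply]⟩
  choose J' hJ' using mem_range
  exact ⟨J', funext hJ'⟩

lemma IsKAry.of_stabilizer_eq_bot {f : Ω →[G] Ω'} (hf : Function.Injective f)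
    (hstab : ∀ a ∉ Set.range f, MulAction.stabilizer G a = ⊥) {k : ℕ} (hk : 2 ≤ k)
    (h : IsKAry G Ω k) : IsKAry G Ω' k := by
  intro n hn I J hIJ
  by_cases hI : ∀ i, I i ∈ Set.range f
  · choose I' hI' using hI
    obtain rfl : f ∘ I' = I := funext hI'
    obtain ⟨J', rfl⟩ := hIJ.exists_eq_comp (one_le_two.trans hk) hn
    obtain ⟨g, hg⟩ := h n hn I' J' ((isRelated_comp_iff hf).1 hIJ)
    exact ⟨g, fun i => (smul_map_eq_map_iff hf).2 (hg i)⟩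
  · obtain ⟨i, hi⟩ := not_forall.1 hI
    exact hIJ.exists_forall_smul_eq_of_stabilizer_eq_bot hk hn (hstab _ hi)

theorem RC_eq_of_stabilizer_eq_bot {f : Ω →[G] Ω'} (hf : Function.Injective f)
    (hstab : ∀ a ∉ Set.range f, MulAction.stabilizer G a = ⊥) : RC G Ω' = RC G Ω :=
  RC_eq_of_isKAry_iff fun _ hk => ⟨.of_injective hf, .of_stabilizer_eq_bot hf hstab hk⟩

end

theorem RC_sum_free_eq_general (G X Y : Type*) [Group G] [MulAction G X] [MulAction G Y]
    (hfree : ∀ g : G, (∃ x : X, g • x = x) → g = 1) : RC G (X ⊕ Y) = RC G Y := by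
  refine RC_eq_of_stabilizer_eq_bot (f := ⟨Sum.inr, fun _ _ => rfl⟩) Sum.inr_injective ?_
  rintro (x | y) ha
  · exact (Subgroup.eq_bot_iff_forall _).2 fun g hg => hfree g ⟨x, Sum.inl_injective hg⟩
  · exact absurd ⟨y, rfl⟩ ha

/-- Lemma: if `G` acts on `X ⊔ Y` with the action on `X` free, then
`RC(G, X ⊔ Y) = RC(G, Y)`. -/
theorem RC_sum_free_eq (G X Y : Type*) [Group G] [Finite G]
    [Fintype X] [Fintype Y] [MulAction G X] [MulAction G Y]
    (hX : Nonempty X) (hY : Nonempty Y)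
    (hfree : ∀ g : G, (∃ x : X, g • x = x) → g = 1) :
    RC G (X ⊕ Y) = RC G Y :=
  RC_sum_free_eq_general G X Y hfree
end

section
/- Let a finite group G act on a finite set Ω. Suppose there is a subset Λ ⊆ Ω with more than 2 elements, a permutation τ of Λ that is not induced on Λ by any element of the setwise stabilizer G_Λ, and permutations η₁, η₂, ..., η_r of Λ such that: (1) for each i, the permutation τη_i of Λ is induced by some element of G_Λ; (2) for each i, the support of τ and the support of η_i (as permutations of Λ) are disjoint; (3) every λ ∈ Λ is fixed by at least one η_i. Then the action of G on Ω is not binary. -/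
/-- Two families `I, J : α → Ω` are *2-related* if every pair of entries of `I` is mapped to the
corresponding pair of entries of `J` by some element of `G`. Arbitrary index types are allowed so
that a subset of `Ω` can serve as its own index type. -/
def TwoRelated (G : Type*) {Ω α : Type*} [SMul G Ω] (I J : α → Ω) : Prop :=
  ∀ x y : α, ∃ g : G, g • I x = J x ∧ g • I y = J y

theorem IsBinary.exists_forall_smul_eq {G Ω α : Type*} [Group G] [MulAction G Ω] [Finite α]
    (hG : IsBinary G Ω) {I J : α → Ω} (hIJ : TwoRelated G I J) :
    ∃ g : G, ∀ x, g • I x = J x := by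
  obtain ⟨n, ⟨e⟩⟩ := Finite.exists_equiv_fin α
  obtain ⟨g, hg⟩ := hG n (I ∘ e.symm) (J ∘ e.symm) fun k l => hIJ (e.symm k) (e.symm l)
  exact ⟨g, e.symm.forall_congr_right.mp hg⟩

section DisjointSupports

variable {G Ω α ι : Type*} {I : α → Ω} {τ : α → α} {η : ι → α → α}

theorem exists_smul_eq_and_smul_eq_of_ne [SMul G Ω]
    (hind : ∀ i, ∃ g : G, ∀ x, g • I x = I (τ (η i x)))
    (hdisj : ∀ i x, τ x = x ∨ η i x = x) (hfix : ∀ x, ∃ i, η i x = x)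
    {x : α} (hx : τ x ≠ x) (y : α) :
    ∃ g : G, g • I x = I (τ x) ∧ g • I y = I (τ y) := by
  obtain ⟨i, hy⟩ := hfix y
  obtain ⟨g, hg⟩ := hind i
  have hηx : η i x = x := (hdisj i x).resolve_left hx
  exact ⟨g, by rw [hg, hηx], by rw [hg, hy]⟩

theorem twoRelated_comp_of_disjoint [Monoid G] [MulAction G Ω]
    (hind : ∀ i, ∃ g : G, ∀ x, g • I x = I (τ (η i x)))
    (hdisj : ∀ i x, τ x = x ∨ η i x = x) (hfix : ∀ x, ∃ i, η i x = x) :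
    TwoRelated G I (I ∘ τ) := by
  intro x y
  by_cases hx : τ x = x
  · by_cases hy : τ y = y
    · exact ⟨1, by simp [hx], by simp [hy]⟩
    · obtain ⟨g, hgy, hgx⟩ := exists_smul_eq_and_smul_eq_of_ne hind hdisj hfix hy x
      exact ⟨g, hgx, hgy⟩
  · exact exists_smul_eq_and_smul_eq_of_ne hind hdisj hfix hx y

end DisjointSupports

theorem not_binary_of_tau_eta_general {G Ω ι : Type*} [Group G] [MulAction G Ω]
    (Λ : Set Ω) [Finite Λ] (τ : Λ → Λ)
    (hτ : ¬ ∃ g : G, ∀ x : Λ, g • (x : Ω) = τ x)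
    (η : ι → Λ → Λ)
    (hind : ∀ i, ∃ g : G, ∀ x : Λ, g • (x : Ω) = τ (η i x))
    (hdisj : ∀ i x, τ x = x ∨ η i x = x)
    (hfix : ∀ x, ∃ i, η i x = x) :
    ¬ IsBinary G Ω := fun hG =>
  hτ (hG.exists_forall_smul_eq (twoRelated_comp_of_disjoint hind hdisj hfix))

/-- Lemma: suppose `G` acts on `Ω`, and there is a subset `Λ ⊆ Ω` with more than 2 elements,
a permutation `τ` of `Λ` not induced by any element of `G`, and permutations `η₁, …, η_r` of
`Λ` such that each `τηᵢ` is induced by an element of `G`, the supports of `τ` and `ηᵢ` are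
disjoint, and every point of `Λ` is fixed by some `ηᵢ`. Then the action is not binary. -/
theorem not_binary_of_tau_eta
    (G Ω : Type*) [Group G] [Finite G] [Fintype Ω] [MulAction G Ω]
    (Λ : Set Ω) (hcard : 2 < Λ.ncard)
    (τ : Equiv.Perm Λ)
    (hτ : ¬ ∃ g : G, ∀ x : Λ, g • (x : Ω) = ((τ x : Λ) : Ω))
    (r : ℕ) (η : Fin r → Equiv.Perm Λ)
    (hind : ∀ i : Fin r, ∃ g : G, ∀ x : Λ, g • (x : Ω) = ((τ (η i x) : Λ) : Ω))
    (hdisj : ∀ (i : Fin r) (x : Λ), τ x = x ∨ η i x = x)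
    (hfix : ∀ x : Λ, ∃ i : Fin r, η i x = x) :
    ¬ IsBinary G Ω :=
  not_binary_of_tau_eta_general Λ τ hτ (fun i => η i) hind hdisj hfix
end

section
/- Suppose a finite group G acts on a finite set Ω, p is a prime, and g and h are commuting elements of G of order p such that the cyclic subgroups ⟨g⟩, ⟨h⟩ and ⟨gh⁻¹⟩ are pairwise conjugate subgroups of G. Write K = ⟨g, h⟩. Suppose that (1) |Fix(K)| < |Fix(g)|, where Fix(K) is the set of points of Ω fixed by every element of K; and (2) g has maximal fixity. Then the action of G on Ω is not binary. -/
/-- Two subgroups of `G` are conjugate when one is the image of the other under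
conjugation by some element of `G`. -/
def SubgroupsConj {G : Type*} [Group G] (A B : Subgroup G) : Prop :=
  ∃ k : G, Subgroup.map (MulAut.conj k).toMonoidHom A = B

section FixedPoints

open MulAction Pointwise

variable {G Ω : Type*} [Group G] [MulAction G Ω]

theorem fixedBy_subset_fixedBy_of_mem_zpowers {a b : G} (hb : b ∈ Subgroup.zpowers a) :
    fixedBy Ω a ⊆ fixedBy Ω b := by
  obtain ⟨n, rfl⟩ := Subgroup.mem_zpowers_iff.1 hb
  exact fixedBy_subset_fixedBy_zpow Ω a n

theorem fixedBy_eq_fixedBy_of_zpowers_eq {a b : G}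
    (hab : Subgroup.zpowers a = Subgroup.zpowers b) : fixedBy Ω a = fixedBy Ω b :=
  Set.Subset.antisymm
    (fixedBy_subset_fixedBy_of_mem_zpowers (hab ▸ Subgroup.mem_zpowers b))
    (fixedBy_subset_fixedBy_of_mem_zpowers (hab ▸ Subgroup.mem_zpowers a))

theorem SubgroupsConj.card_fixedBy_eq {a b : G}
    (hab : SubgroupsConj (Subgroup.zpowers a) (Subgroup.zpowers b)) :
    Nat.card (fixedBy Ω a) = Nat.card (fixedBy Ω b) := by
  obtain ⟨k, hk⟩ := hab
  have hzpowers : Subgroup.zpowers (k * a * k⁻¹) = Subgroup.zpowers b := by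
    rw [← hk, MonoidHom.map_zpowers]
    rfl
  rw [← fixedBy_eq_fixedBy_of_zpowers_eq hzpowers, ← smul_fixedBy, Nat.card_coe_set_eq,
    Nat.card_coe_set_eq, Set.ncard_smul_set]

theorem fixedBy_inter_fixedBy_subset_of_le_closure {a b : G} {K : Subgroup G}
    (hK : K ≤ Subgroup.closure {a, b}) :
    fixedBy Ω a ∩ fixedBy Ω b ⊆ {ω | ∀ x ∈ K, x • ω = ω} := by
  rintro ω ⟨ha, hb⟩
  have hstab : Subgroup.closure {a, b} ≤ stabilizer G ω :=
    (Subgroup.closure_le _).2 (Set.pair_subset ha hb)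
  exact hK.trans hstab

theorem SubgroupsConj.not_fixedBy_subset_fixedBy [Finite Ω] {a b : G} {K : Subgroup G}
    (hab : SubgroupsConj (Subgroup.zpowers a) (Subgroup.zpowers b))
    (hK : K ≤ Subgroup.closure {a, b})
    (hlt : Nat.card {ω : Ω | ∀ x ∈ K, x • ω = ω} < Nat.card (fixedBy Ω a)) :
    ¬ fixedBy Ω b ⊆ fixedBy Ω a := by
  intro hsub
  have hfix : fixedBy Ω b ⊆ {ω | ∀ x ∈ K, x • ω = ω} :=
    (Set.subset_inter hsub subset_rfl).trans (fixedBy_inter_fixedBy_subset_of_le_closure hK)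
  rw [hab.card_fixedBy_eq] at hlt
  exact hlt.not_ge (Nat.card_mono (Set.toFinite _) hfix)

theorem closure_pair_le_closure_pair_mul_inv (a b : G) :
    Subgroup.closure {a, b} ≤ Subgroup.closure {a, a * b⁻¹} := by
  have ha : a ∈ Subgroup.closure {a, a * b⁻¹} := Subgroup.mem_closure_of_mem (by simp)
  have hab : a * b⁻¹ ∈ Subgroup.closure {a, a * b⁻¹} := Subgroup.mem_closure_of_mem (by simp)
  have hb : b ∈ Subgroup.closure {a, a * b⁻¹} := by
    simpa using mul_mem (inv_mem hab) ha
  exact (Subgroup.closure_le _).2 (Set.pair_subset ha hb)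

end FixedPoints

section Order

open MulAction

theorem period_eq_period_of_smul_pow_smul {M α : Type*} [Monoid M] [MulAction M α] {x g : M} {b : α}
    (hxg : ∀ n : ℕ, x • g ^ n • b = g • g ^ n • b) : period x b = period g b := by
  have hpow (n : ℕ) : x ^ n • b = g ^ n • b := by
    induction n with
    | zero => simp only [pow_zero]
    | succ n ih => rw [pow_succ', pow_succ', mul_smul, mul_smul, ih, hxg]
  apply Nat.dvd_antisymm
  · rw [← pow_smul_eq_iff_period_dvd, hpow, pow_period_smul]
  · rw [← pow_smul_eq_iff_period_dvd, ← hpow, pow_period_smul]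

theorem period_eq_orderOf_of_prime {M α : Type*} [Monoid M] [MulAction M α] {g : M} {b : α}
    (hg : (orderOf g).Prime) (hgb : g • b ≠ b) : period g b = orderOf g :=
  (hg.eq_one_or_self_of_dvd _ (period_dvd_orderOf g b)).resolve_left (mt period_eq_one_iff.1 hgb)

theorem exists_orderOf_eq_and_fixedBy_subset {G : Type*} (Ω : Type*) [Group G] [MulAction G Ω]
    {x : G} {n : ℕ} (hx : IsOfFinOrder x) (hn : n ∣ orderOf x) :
    ∃ y : G, orderOf y = n ∧ fixedBy Ω x ⊆ fixedBy Ω y :=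
  ⟨x ^ (orderOf x / n), orderOf_pow_orderOf_div hx.orderOf_pos.ne' hn,
    fixedBy_subset_fixedBy_of_mem_zpowers (Subgroup.npow_mem_zpowers x _)⟩

end Order

namespace IsBinary

open MulAction

variable {G Ω : Type*} [Group G] [MulAction G Ω] [Finite (toPermHom G Ω).range]

theorem exists_eqOn (hbin : IsBinary G Ω) {S : Set Ω} {f : Ω → Ω}
    (hf : ∀ u ∈ S, ∀ v ∈ S, ∃ x : G, x • u = f u ∧ x • v = f v) :
    ∃ x : G, Set.EqOn (x • ·) f S := by
  by_contra! hne
  -- One point of `S` for each induced permutation, witnessing that it differs from `f`, already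
  -- gives a finite tuple which no group element maps as `f` does.
  have hwitness (π : (toPermHom G Ω).range) : ∃ u ∈ S, (π : Equiv.Perm Ω) u ≠ f u := by
    obtain ⟨_, x, rfl⟩ := π
    simpa [Set.EqOn] using hne x
  choose w hwS hw using hwitness
  obtain ⟨n, ⟨e⟩⟩ := Finite.exists_equiv_fin (toPermHom G Ω).range
  obtain ⟨x, hx⟩ := hbin n (fun i => w (e.symm i)) (fun i => f (w (e.symm i)))
    (fun i j => hf _ (hwS _) _ (hwS _))
  let π : (toPermHom G Ω).range := ⟨toPermHom G Ω x, x, rfl⟩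
  have hxπ : x • w π = f (w π) := by simpa using hx (e π)
  exact hw π hxπ

theorem exists_eqOn_union_union (hbin : IsBinary G Ω) {A B C : Set Ω} {f : Ω → Ω}
    (hAB : ∃ x : G, Set.EqOn (x • ·) f (A ∪ B)) (hAC : ∃ x : G, Set.EqOn (x • ·) f (A ∪ C))
    (hBC : ∃ x : G, Set.EqOn (x • ·) f (B ∪ C)) :
    ∃ x : G, Set.EqOn (x • ·) f (A ∪ B ∪ C) := by
  have hpair (u : Ω) (hu : u ∈ A ∪ B ∪ C) (v : Ω) (hv : v ∈ A ∪ B ∪ C) :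
      u ∈ A ∪ B ∧ v ∈ A ∪ B ∨ u ∈ A ∪ C ∧ v ∈ A ∪ C ∨ u ∈ B ∪ C ∧ v ∈ B ∪ C := by
    simp only [Set.mem_union] at hu hv ⊢
    tauto
  refine hbin.exists_eqOn fun u hu v hv => ?_
  rcases hpair u hu v hv with ⟨hu, hv⟩ | ⟨hu, hv⟩ | ⟨hu, hv⟩
  · exact hAB.imp fun x hx => ⟨hx hu, hx hv⟩
  · exact hAC.imp fun x hx => ⟨hx hu, hx hv⟩
  · exact hBC.imp fun x hx => ⟨hx hu, hx hv⟩

theorem exists_fixedBy_subset_and_eqOn (hbin : IsBinary G Ω) (g h : G) :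
    ∃ x : G, fixedBy Ω g ∪ fixedBy Ω (g * h⁻¹) ⊆ fixedBy Ω x ∧
      Set.EqOn (x • ·) (g • ·) (fixedBy Ω h) := by
  classical
  have hmul {u : Ω} (hu : u ∈ fixedBy Ω h) : (g * h⁻¹) • u = g • u := by
    rw [mul_smul, inv_smul_eq_iff.2 (mem_fixedBy.1 hu).symm]
  let f : Ω → Ω := (fixedBy Ω h).piecewise (g • ·) id
  have hfh : Set.EqOn f (g • ·) (fixedBy Ω h) := Set.piecewise_eqOn _ _ _
  have hfg : Set.EqOn f id (fixedBy Ω g) := by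
    intro u hu
    by_cases huh : u ∈ fixedBy Ω h
    · exact (hfh huh).trans hu
    · exact Set.piecewise_eq_of_notMem _ _ _ huh
  have hfgh : Set.EqOn f id (fixedBy Ω (g * h⁻¹)) := by
    intro u hu
    by_cases huh : u ∈ fixedBy Ω h
    · exact (hfh huh).trans ((hmul huh).symm.trans hu)
    · exact Set.piecewise_eq_of_notMem _ _ _ huh
  obtain ⟨x, hx⟩ := hbin.exists_eqOn_union_union
    (A := fixedBy Ω g) (B := fixedBy Ω h) (C := fixedBy Ω (g * h⁻¹)) (f := f)
    ⟨g, Set.EqOn.union (fun u hu => (mem_fixedBy.1 hu).trans (hfg hu).symm) hfh.symm⟩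
    ⟨1, Set.EqOn.union (fun u hu => (one_smul G u).trans (hfg hu).symm)
      (fun u hu => (one_smul G u).trans (hfgh hu).symm)⟩
    ⟨g * h⁻¹, Set.EqOn.union (fun u hu => (hmul hu).trans (hfh hu).symm)
      (fun u hu => (mem_fixedBy.1 hu).trans (hfgh hu).symm)⟩
  obtain ⟨⟨hxg, hxh⟩, hxgh⟩ := by simpa only [Set.eqOn_union] using hx
  exact ⟨x, Set.union_subset (hxg.trans hfg) (hxgh.trans hfgh), hxh.trans hfh⟩

end IsBinary

open MulAction in
theorem not_binary_of_commuting_p_elements_general {G Ω : Type*} [Group G] [MulAction G Ω]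
    [Finite (toPermHom G Ω).range] (htorsion : IsMulTorsion G) {p : ℕ} (hp : p.Prime) {g h : G}
    (hg : orderOf g = p) (hcomm : Commute g h) (hfixh : ¬ fixedBy Ω h ⊆ fixedBy Ω g)
    (hfixgh : ¬ fixedBy Ω (g * h⁻¹) ⊆ fixedBy Ω g)
    (hmax : ∀ x : G, orderOf x = p → ¬ fixedBy Ω g ⊂ fixedBy Ω x) :
    ¬ IsBinary G Ω := by
  intro hbin
  subst hg
  obtain ⟨b, hb, hgb⟩ := Set.not_subset.1 hfixh
  obtain ⟨x, hxfix, hxh⟩ := hbin.exists_fixedBy_subset_and_eqOn g h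
  have hmem (n : ℕ) : g ^ n • b ∈ fixedBy Ω h :=
    (smul_mem_of_set_mem_fixedBy (fixedBy_mem_fixedBy_of_commute (hcomm.pow_left n).symm)).2 hb
  have hperiod : period x b = orderOf g :=
    (period_eq_period_of_smul_pow_smul fun n => hxh (hmem n)).trans
      (period_eq_orderOf_of_prime hp hgb)
  obtain ⟨y, hy, hxy⟩ :=
    exists_orderOf_eq_and_fixedBy_subset Ω (htorsion x) (hperiod ▸ period_dvd_orderOf x b)
  obtain ⟨hgy, hghy⟩ := Set.union_subset_iff.1 (hxfix.trans hxy)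
  exact hmax y hy ⟨hgy, fun hyg => hfixgh (hghy.trans hyg)⟩

/-- Lemma: suppose `G` acts on `Ω`, `p` is a prime, and `g, h` are commuting elements of
order `p` such that `⟨g⟩`, `⟨h⟩`, `⟨gh⁻¹⟩` are pairwise conjugate subgroups of `G`. If
`|Fix(⟨g, h⟩)| < |Fix(g)|` and `g` has maximal fixity, then the action is not binary. -/
theorem not_binary_of_commuting_p_elements
    (G Ω : Type*) [Group G] [Finite G] [Fintype Ω] [MulAction G Ω]
    (p : ℕ) (hp : p.Prime) (g h : G)
    (hg : orderOf g = p) (hh : orderOf h = p) (hcomm : Commute g h)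
    (hconj₁ : SubgroupsConj (Subgroup.zpowers g) (Subgroup.zpowers h))
    (hconj₂ : SubgroupsConj (Subgroup.zpowers g) (Subgroup.zpowers (g * h⁻¹)))
    (hconj₃ : SubgroupsConj (Subgroup.zpowers h) (Subgroup.zpowers (g * h⁻¹)))
    (hfixlt : Nat.card ↥{ω : Ω | ∀ x ∈ Subgroup.closure ({g, h} : Set G), x • ω = ω} <
      Nat.card ↥(MulAction.fixedBy Ω g))
    (hmax : ∀ x : G, orderOf x = p →
      Nat.card ↥(MulAction.fixedBy Ω x) ≤ Nat.card ↥(MulAction.fixedBy Ω g)) :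
    ¬ IsBinary G Ω :=
  not_binary_of_commuting_p_elements_general isMulTorsion_of_finite hp hg hcomm
    (hconj₁.not_fixedBy_subset_fixedBy le_rfl hfixlt)
    (hconj₂.not_fixedBy_subset_fixedBy (closure_pair_le_closure_pair_mul_inv g h) hfixlt)
    fun x hx hlt => (Set.ncard_lt_ncard hlt).not_ge (hmax x hx)
end

section
/- Let G be a finite group acting transitively on a finite set Ω with point stabilizer H ≤ G (i.e., the action is equivalent to the action on the cosets of H). Let p be a prime, and suppose there exists an elementary abelian subgroup K of G of order p² satisfying: (1) K = ⟨g, h⟩ for some elements g, h ∈ G of order p of maximal fixity; (2) ⟨g⟩, ⟨h⟩ and ⟨gh⁻¹⟩ are pairwise conjugate subgroups of G; (3) K ∩ H = ⟨g⟩. Then the action of G on Ω is not binary. -/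
/-!
Let `Λ = Fix(g) ∪ Fix(h) ∪ Fix(gh⁻¹)` and let `τ : Λ → Ω` be the identity on `Fix(g) ∪ Fix(h)` and
agree with `g` (equivalently, with `h`) on `Fix(gh⁻¹)`. On the union of any two of these three sets
`τ` is induced by one of `1`, `g`, `h`, so an enumeration of `Λ` and its image under `τ` are
2-related. If the action were binary, some `f ∈ G` would induce `τ` on all of `Λ`.

Since `ω₀` is fixed by `g` but not by `h`, and `Fix(gh⁻¹)` has at least as many points as `Fix(g)`
by conjugacy, `g` moves a point of `Fix(gh⁻¹)`. There `f` acts as `g`, so `p` divides the order of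
`f`, and a power of `f` has order `p` and fixes `Fix(g) ∪ Fix(h)` pointwise. Maximal fixity of `h`
makes this fixed point set equal to `Fix(h)`, which does not contain `ω₀`.
-/

open MulAction

section Monoid

variable {M α : Type*} [Monoid M] [MulAction M α] {f g : M} {s : Set α}

lemma pow_smul_eq_pow_smul_of_eqOn (hfg : Set.EqOn (f • ·) (g • ·) s)
    (hs : Set.MapsTo (g • ·) s s) {a : α} (ha : a ∈ s) (n : ℕ) : f ^ n • a = g ^ n • a := by
  induction n with
  | zero => simp only [pow_zero]
  | succ n ih =>
    have hmem : g ^ n • a ∈ s := by simpa only [smul_iterate] using hs.iterate n ha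
    calc f ^ (n + 1) • a = f • g ^ n • a := by rw [pow_succ', mul_smul, ih]
      _ = g • g ^ n • a := hfg hmem
      _ = g ^ (n + 1) • a := by rw [pow_succ', mul_smul]

lemma period_eq_period_of_eqOn (hfg : Set.EqOn (f • ·) (g • ·) s)
    (hs : Set.MapsTo (g • ·) s s) {a : α} (ha : a ∈ s) : period f a = period g a := by
  have hpow := pow_smul_eq_pow_smul_of_eqOn hfg hs ha
  apply Nat.dvd_antisymm
  · rw [← pow_smul_eq_iff_period_dvd, hpow, pow_period_smul]
  · rw [← pow_smul_eq_iff_period_dvd, ← hpow, pow_period_smul]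

lemma period_eq_orderOf_of_smul_ne (hg : (orderOf g).Prime) {a : α} (ha : g • a ≠ a) :
    period g a = orderOf g :=
  (hg.eq_one_or_self_of_dvd _ (period_dvd_orderOf g a)).resolve_left
    fun h => ha (period_eq_one_iff.1 h)

lemma mapsTo_smul_setOf_smul_eq_smul {h : M} (hcomm : Commute g h) :
    Set.MapsTo (g • ·) {a : α | g • a = h • a} {a | g • a = h • a} := fun a ha =>
  calc g • g • a = g • h • a := congrArg (g • ·) ha
    _ = h • g • a := by rw [← mul_smul, hcomm.eq, mul_smul]

end Monoid

section Group

variable {G Ω : Type*} [Group G] [MulAction G Ω] {g h : G}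

lemma notMem_zpowers_of_card_closure_pair_ne
    (hne : Nat.card (Subgroup.closure {g, h}) ≠ orderOf g) : h ∉ Subgroup.zpowers g := by
  intro hmem
  have hle : Subgroup.closure {g, h} ≤ Subgroup.zpowers g :=
    (Subgroup.closure_le _).2 (Set.pair_subset (Subgroup.mem_zpowers g) hmem)
  have hge : Subgroup.zpowers g ≤ Subgroup.closure {g, h} :=
    Subgroup.zpowers_le.2 (Subgroup.subset_closure (Set.mem_insert g {h}))
  rw [le_antisymm hle hge, Nat.card_zpowers] at hne
  exact hne rfl

lemma fixedBy_subset_of_mem_zpowers (hgh : g ∈ Subgroup.zpowers h) :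
    fixedBy Ω h ⊆ fixedBy Ω g := by
  obtain ⟨n, rfl⟩ := hgh
  exact fixedBy_subset_fixedBy_zpow Ω h n

lemma fixedBy_eq_of_zpowers_eq (hgh : Subgroup.zpowers g = Subgroup.zpowers h) :
    fixedBy Ω g = fixedBy Ω h :=
  (fixedBy_subset_of_mem_zpowers (hgh ▸ Subgroup.mem_zpowers h)).antisymm
    (fixedBy_subset_of_mem_zpowers (hgh ▸ Subgroup.mem_zpowers g))

open scoped Pointwise in
lemma SubgroupsConj.card_fixedBy_eq_s11
    (hgh : SubgroupsConj (Subgroup.zpowers g) (Subgroup.zpowers h)) :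
    Nat.card (fixedBy Ω g) = Nat.card (fixedBy Ω h) := by
  obtain ⟨k, hk⟩ := hgh
  have hzpowers : Subgroup.zpowers (k * g * k⁻¹) = Subgroup.zpowers h := by
    rw [← hk, MonoidHom.map_zpowers, MulEquiv.coe_toMonoidHom, MulAut.conj_apply]
  rw [← fixedBy_eq_of_zpowers_eq hzpowers, ← smul_fixedBy]
  exact (Set.ncard_smul_set k _).symm

lemma mem_fixedBy_mul_inv_iff (hcomm : Commute g h) {x : Ω} :
    x ∈ fixedBy Ω (g * h⁻¹) ↔ g • x = h • x := by
  rw [mem_fixedBy, hcomm.inv_right.eq, mul_smul, inv_smul_eq_iff]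

lemma exists_smul_eq_smul_and_smul_ne [Finite Ω] (hcomm : Commute g h)
    (hcard : Nat.card (fixedBy Ω g) ≤ Nat.card (fixedBy Ω (g * h⁻¹)))
    {ω : Ω} (hgω : g • ω = ω) (hhω : h • ω ≠ ω) : ∃ α : Ω, g • α = h • α ∧ g • α ≠ α := by
  by_contra! hfix
  have hsub : fixedBy Ω (g * h⁻¹) ⊆ fixedBy Ω g :=
    fun x hx => hfix x ((mem_fixedBy_mul_inv_iff hcomm).1 hx)
  have hmem : ω ∈ fixedBy Ω (g * h⁻¹) := Set.eq_of_subset_of_ncard_le hsub hcard ▸ hgω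
  exact hhω (((mem_fixedBy_mul_inv_iff hcomm).1 hmem).symm.trans hgω)

lemma IsBinary.exists_forall_smul_eq_s11 (hbin : IsBinary G Ω) {ι : Type*} [Finite ι] (I J : ι → Ω)
    (hIJ : ∀ i j, ∃ k : G, k • I i = J i ∧ k • I j = J j) : ∃ k : G, ∀ i, k • I i = J i := by
  let e := Finite.equivFin ι
  obtain ⟨k, hk⟩ := hbin (Nat.card ι) (I ∘ e.symm) (J ∘ e.symm) fun _ _ => hIJ _ _
  exact ⟨k, fun i => by simpa only [Function.comp_apply, e.symm_apply_apply] using hk (e i)⟩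

lemma IsBinary.exists_fixedBy_subset_and_eqOn_s11 [Finite Ω] (hbin : IsBinary G Ω) (g h : G) :
    ∃ f : G, fixedBy Ω g ⊆ fixedBy Ω f ∧ fixedBy Ω h ⊆ fixedBy Ω f ∧
      Set.EqOn (f • ·) (g • ·) {x : Ω | g • x = h • x} := by
  classical
  let τ : Ω → Ω := fun x => if g • x = h • x then g • x else x
  have τ_one : ∀ x, g • x = x ∨ h • x = x → (1 : G) • x = τ x := by grind [one_smul]
  have τ_left : ∀ x, g • x = x ∨ g • x = h • x → g • x = τ x := by grind
  have τ_right : ∀ x, h • x = x ∨ g • x = h • x → h • x = τ x := by grind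
  let Λ : Set Ω := {x | g • x = x ∨ h • x = x ∨ g • x = h • x}
  have two_related : ∀ x y : Λ, ∃ k : G, k • x.1 = τ x ∧ k • y.1 = τ y := by
    rintro ⟨x, hx⟩ ⟨y, hy⟩
    -- Each point satisfies two of the three premises above, so any two points share one.
    have shared : ((g • x = x ∨ h • x = x) ∧ (g • y = y ∨ h • y = y)) ∨
        ((g • x = x ∨ g • x = h • x) ∧ (g • y = y ∨ g • y = h • y)) ∨
        ((h • x = x ∨ g • x = h • x) ∧ (h • y = y ∨ g • y = h • y)) := by
      simp only [Λ, Set.mem_ofPred_eq] at hx hy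
      tauto
    rcases shared with ⟨hx, hy⟩ | ⟨hx, hy⟩ | ⟨hx, hy⟩
    · exact ⟨1, τ_one x hx, τ_one y hy⟩
    · exact ⟨g, τ_left x hx, τ_left y hy⟩
    · exact ⟨h, τ_right x hx, τ_right y hy⟩
  obtain ⟨f, hf⟩ := hbin.exists_forall_smul_eq_s11 (fun x : Λ => x.1) (fun x => τ x) two_related
  refine ⟨f, fun x hx => ?_, fun x hx => ?_, fun x hx => ?_⟩
  · exact (hf ⟨x, .inl hx⟩).trans ((τ_one x (.inl hx)).symm.trans (one_smul G x))
  · exact (hf ⟨x, .inr (.inl hx)⟩).trans ((τ_one x (.inr hx)).symm.trans (one_smul G x))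
  · exact (hf ⟨x, .inr (.inr hx)⟩).trans (τ_left x (.inr hx)).symm

lemma IsBinary.exists_orderOf_eq_and_fixedBy_subset [Finite Ω] (hbin : IsBinary G Ω)
    (hG : IsMulTorsion G) (hg : (orderOf g).Prime) (hcomm : Commute g h)
    {α : Ω} (hα : g • α = h • α) (hgα : g • α ≠ α) :
    ∃ q : G, orderOf q = orderOf g ∧ fixedBy Ω g ⊆ fixedBy Ω q ∧ fixedBy Ω h ⊆ fixedBy Ω q := by
  obtain ⟨f, hgf, hhf, hf⟩ := hbin.exists_fixedBy_subset_and_eqOn_s11 g h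
  have hdvd : orderOf g ∣ orderOf f :=
    calc orderOf g = period g α := (period_eq_orderOf_of_smul_ne hg hgα).symm
      _ = period f α :=
        (period_eq_period_of_eqOn hf (mapsTo_smul_setOf_smul_eq_smul hcomm) hα).symm
      _ ∣ orderOf f := period_dvd_orderOf f α
  have hfq : fixedBy Ω f ⊆ fixedBy Ω (f ^ (orderOf f / orderOf g)) :=
    fixedBy_subset_of_mem_zpowers (Subgroup.npow_mem_zpowers f _)
  exact ⟨_, orderOf_pow_orderOf_div (hG f).orderOf_pos.ne' hdvd, hgf.trans hfq, hhf.trans hfq⟩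

theorem not_binary_of_elementary_abelian_meeting_stabilizer_general [Finite Ω]
    (hG : IsMulTorsion G) (hg : (orderOf g).Prime) (hcomm : Commute g h)
    (hmax : ∀ x : G, orderOf x = orderOf g → Nat.card (fixedBy Ω x) ≤ Nat.card (fixedBy Ω h))
    (hcard : Nat.card (fixedBy Ω g) ≤ Nat.card (fixedBy Ω (g * h⁻¹)))
    {ω : Ω} (hgω : g • ω = ω) (hhω : h • ω ≠ ω) : ¬ IsBinary G Ω := by
  intro hbin
  obtain ⟨α, hα, hgα⟩ := exists_smul_eq_smul_and_smul_ne hcomm hcard hgω hhω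
  obtain ⟨q, hq, hgq, hhq⟩ := hbin.exists_orderOf_eq_and_fixedBy_subset hG hg hcomm hα hgα
  have hfix : fixedBy Ω h = fixedBy Ω q := Set.eq_of_subset_of_ncard_le hhq (hmax q hq)
  exact hhω (hfix.ge (hgq hgω))

end Group

/-- Corollary: suppose `G` acts transitively on `Ω` with point stabilizer `H`, `p` is a
prime, and `K = ⟨g, h⟩` is an elementary abelian subgroup of order `p²`, with `g, h` of
order `p` of maximal fixity, `⟨g⟩`, `⟨h⟩` and `⟨gh⁻¹⟩` pairwise conjugate in `G`, and
`K ∩ H = ⟨g⟩`. Then the action of `G` on `Ω` is not binary. -/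
theorem not_binary_of_elementary_abelian_meeting_stabilizer
    (G Ω : Type*) [Group G] [Finite G] [Fintype Ω] [MulAction G Ω]
    [MulAction.IsPretransitive G Ω]
    (ω₀ : Ω) (H : Subgroup G) (hH : H = MulAction.stabilizer G ω₀)
    (p : ℕ) (hp : p.Prime)
    (K : Subgroup G) (g h : G)
    (hK : K = Subgroup.closure ({g, h} : Set G))
    (hcard : Nat.card K = p ^ 2)
    (htors : ∀ x ∈ K, x ^ p = 1)
    (habel : ∀ x ∈ K, ∀ y ∈ K, Commute x y)
    (hg : orderOf g = p) (hh : orderOf h = p)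
    (hmaxg : ∀ x : G, orderOf x = p →
      Nat.card ↥(MulAction.fixedBy Ω x) ≤ Nat.card ↥(MulAction.fixedBy Ω g))
    (hmaxh : ∀ x : G, orderOf x = p →
      Nat.card ↥(MulAction.fixedBy Ω x) ≤ Nat.card ↥(MulAction.fixedBy Ω h))
    (hconj₁ : SubgroupsConj (Subgroup.zpowers g) (Subgroup.zpowers h))
    (hconj₂ : SubgroupsConj (Subgroup.zpowers g) (Subgroup.zpowers (g * h⁻¹)))
    (hconj₃ : SubgroupsConj (Subgroup.zpowers h) (Subgroup.zpowers (g * h⁻¹)))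
    (hKH : K ⊓ H = Subgroup.zpowers g) :
    ¬ IsBinary G Ω := by
  subst hH hK hg
  have hgK : g ∈ Subgroup.closure {g, h} := Subgroup.subset_closure (Set.mem_insert g {h})
  have hhK : h ∈ Subgroup.closure {g, h} := Subgroup.subset_closure (Set.mem_insert_of_mem g rfl)
  have hgω : g • ω₀ = ω₀ := (hKH.ge (Subgroup.mem_zpowers g)).2
  have h_notMem : h ∉ Subgroup.zpowers g :=
    notMem_zpowers_of_card_closure_pair_ne (hcard.trans_ne (lt_self_pow₀ hp.one_lt one_lt_two).ne')
  have hhω : h • ω₀ ≠ ω₀ := fun hfix => h_notMem (hKH.le ⟨hhK, hfix⟩)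
  exact not_binary_of_elementary_abelian_meeting_stabilizer_general isMulTorsion_of_finite hp
    (habel g hgK h hhK) hmaxh hconj₂.card_fixedBy_eq_s11.le hgω hhω
end

section
/- Let C be a conjugacy class of involutions in the symmetric group Sₙ. If s, t ∈ C are distinct, st = ts, and st ∈ C, then the size of the support of s is divisible by 4. In particular, if the size of the support of the elements of C is not divisible by 4, then the graph Γ(C) has no edges at all. -/
/-!
If `t` and `s * t` are conjugate, then every homomorphism to a commutative group kills `s`; in
particular `sign s = 1`. An involution is a product of `k` disjoint transpositions, so its support
has `2 * k` points and its sign is `(-1) ^ k`: it is even exactly when `4` divides `2 * k`.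
-/

theorem map_eq_one_of_isConj_mul {M N : Type*} [Monoid M] [CancelCommMonoid N] (f : M →* N)
    {s t : M} (h : IsConj t (s * t)) : f s = 1 := by
  have map_eq : f t = f s * f t := by
    rw [← map_mul]
    exact isConj_iff_eq.1 (f.map_isConj h)
  exact right_eq_mul.1 map_eq

section Perm

open Equiv.Perm

variable {α : Type*} [Fintype α] [DecidableEq α] {s t : Equiv.Perm α}

theorem card_support_eq_of_isConj (h : IsConj s t) : s.support.card = t.support.card := by
  obtain ⟨g, rfl⟩ := isConj_iff.1 h
  exact card_support_conj.symm

theorem four_dvd_card_support_iff_sign_eq_one (hs : s ^ 2 = 1) :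
    4 ∣ s.support.card ↔ sign s = 1 := by
  obtain ⟨k, hk⟩ : ∃ k, s.cycleType = Multiset.replicate k 2 :=
    ⟨_, cycleType_of_pow_prime_eq_one hs⟩
  have card_support : s.support.card = k * 2 := by
    rw [← sum_cycleType, hk, Multiset.sum_replicate, smul_eq_mul]
  have sign_eq : sign s = (-1) ^ k := by
    rw [sign_of_cycleType, sum_cycleType, card_support, hk, Multiset.card_replicate, pow_add,
      pow_mul, Int.units_sq, one_mul]
  rw [card_support, sign_eq, neg_one_pow_eq_one_iff_even (by decide), even_iff_two_dvd]
  omega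

theorem support_card_dvd_four_of_edge_general (hs : s ^ 2 = 1) (h : IsConj t (s * t)) :
    4 ∣ s.support.card :=
  (four_dvd_card_support_iff_sign_eq_one hs).2 (map_eq_one_of_isConj_mul sign h)

end Perm

/-- Lemma: let `C` be a conjugacy class of involutions in `Sₙ`. If `s, t ∈ C` are distinct,
commute, and `st ∈ C`, then `4` divides the size of the support of `s`. In particular, if
the support size of the elements of `C` is not divisible by `4`, the graph `Γ(C)` has no
edges at all. -/
theorem support_card_dvd_four_of_edge
    (n : ℕ) (c : Equiv.Perm (Fin n)) (hc : orderOf c = 2)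
    (C : Set (Equiv.Perm (Fin n))) (hC : C = {x : Equiv.Perm (Fin n) | IsConj c x}) :
    (∀ s ∈ C, ∀ t ∈ C, s ≠ t → Commute s t → s * t ∈ C → 4 ∣ s.support.card) ∧
    ((¬ 4 ∣ c.support.card) →
      ∀ s ∈ C, ∀ t ∈ C, s ≠ t → ¬ (Commute s t ∧ s * t ∈ C)) := by
  subst hC
  have c_sq : c ^ 2 = 1 := hc ▸ pow_orderOf_eq_one c
  have edge {s t} (hs : IsConj c s) (ht : IsConj c t) (hst : IsConj c (s * t)) :
      4 ∣ s.support.card := by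
    have s_sq : s ^ 2 = 1 := isConj_one_right.1 (c_sq ▸ hs.pow 2)
    exact support_card_dvd_four_of_edge_general s_sq (ht.symm.trans hst)
  exact ⟨fun s hs t ht _ _ hst ↦ edge hs ht hst,
    fun h4 s hs t ht _ h ↦ h4 (card_support_eq_of_isConj hs ▸ edge hs ht h.2)⟩
end

section
/- Let p be a prime and let K be a subgroup of the alternating group A_p that is generated by two p-cycles. If K is not abelian, then the order of K is even. -/
/-!
Suppose that a group `K` of permutations of `p` letters has odd order and contains an element of
order `p`. Identify the letters with `ZMod p` so that this element is the translation `x ↦ x + 1`.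
The set `D = {g 1 - g 0 : g ∈ K}` satisfies `g (x + d) - g x ∈ D` for all `g ∈ K` and `d ∈ D`. If
both `d` and `-d` were in `D`, some element of `K` would swap two letters, which is impossible in
odd order; hence `2 |D| < p`.

Following P. Müller's proof of Burnside's theorem on permutation groups of prime degree, such
invariance forces each `g ∈ K` to be affine. Represent `g` by a polynomial `f` of degree `n < p`,
and let `r ≥ 1` be minimal with `∑ d ∈ D, d ^ r ≠ 0`; then `r ≤ |D|`. For `n k < p` invariance gives
the polynomial identity `∑ d ∈ D, f (X + d) ^ k = ∑ d ∈ D, (f + d) ^ k`. If `n ≥ 2` and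
`k = ⌈r / n⌉`, the coefficients at `n k - r` differ by a nonzero multiple of `∑ d ∈ D, d ^ r`.

An affine map `x ↦ a x + b` whose `p`-th power is the identity has `a = a ^ p = 1`, so it commutes
with `x ↦ x + 1`. Hence any two elements of `K` whose `p`-th power is trivial commute.
-/

open Equiv (Perm)

section PowerSums

open Polynomial

theorem sum_eval_of_power_sums_eq_zero {R ι : Type*} [CommSemiring R] {s : Finset ι} {v : ι → R}
    {r : ℕ} (hr : r ≠ 0) (hv : ∀ j ≠ 0, j < r → ∑ i ∈ s, v i ^ j = 0)
    {g : R[X]} (hg : g.natDegree ≤ r) :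
    ∑ i ∈ s, g.eval (v i) = s.card * g.coeff 0 + g.coeff r * ∑ i ∈ s, v i ^ r := by
  calc ∑ i ∈ s, g.eval (v i) = ∑ j ∈ Finset.range (r + 1), g.coeff j * ∑ i ∈ s, v i ^ j := by
        simp_rw [eval_eq_sum_range' (Nat.lt_succ_of_le hg), Finset.mul_sum]
        exact Finset.sum_comm
    _ = g.coeff 0 * ∑ i ∈ s, v i ^ 0 + g.coeff r * ∑ i ∈ s, v i ^ r := by
        rw [Finset.sum_range_succ, Finset.sum_eq_single_of_mem 0
          (Finset.mem_range.2 (Nat.pos_of_ne_zero hr))]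
        intro j hj hj0
        rw [hv j hj0 (Finset.mem_range.1 hj), mul_zero]
    _ = s.card * g.coeff 0 + g.coeff r * ∑ i ∈ s, v i ^ r := by simp [mul_comm]

/-- Otherwise the polynomial `X * ∏ d ∈ D \ {a}, (X - d)`, which on `D` is nonzero only at `a`,
would have sum zero over `D`. -/
theorem exists_power_sum_ne_zero {R : Type*} [CommRing R] [IsDomain R] {D : Finset R} {a : R}
    (ha : a ∈ D) (ha0 : a ≠ 0) : ∃ r ≠ 0, r ≤ D.card ∧ ∑ d ∈ D, d ^ r ≠ 0 := by
  classical
  by_contra! hzero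
  have hD : D.card ≠ 0 := Finset.card_ne_zero_of_mem ha
  let Q : R[X] := X * ∏ d ∈ D.erase a, (X - C d)
  have hdeg : Q.natDegree ≤ D.card :=
    calc Q.natDegree ≤ 1 + (D.erase a).card :=
          natDegree_mul_le_of_le natDegree_X_le (natDegree_finsetProd_X_sub_C_eq_card _ _).le
      _ = D.card := by rw [add_comm, Finset.card_erase_add_one ha]
  have hsum_zero : ∑ d ∈ D, Q.eval d = 0 := by
    rw [sum_eval_of_power_sums_eq_zero hD (fun j hj hlt => hzero j hj hlt.le) hdeg,
      hzero _ hD le_rfl]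
    simp [Q]
  have hsum_eq : ∑ d ∈ D, Q.eval d = Q.eval a := by
    refine Finset.sum_eq_single_of_mem a ha fun d hd hda => ?_
    simp [Q, eval_prod, Finset.prod_eq_zero (Finset.mem_erase.2 ⟨hda, hd⟩)]
  have hQa : Q.eval a ≠ 0 := by
    simp only [Q, eval_mul, eval_X, eval_prod, eval_sub, eval_C]
    refine mul_ne_zero ha0 (Finset.prod_ne_zero_iff.2 fun d hd => ?_)
    exact sub_ne_zero.2 (Finset.ne_of_mem_erase hd).symm
  exact hQa (hsum_eq.symm.trans hsum_zero)

variable {R : Type*} [CommSemiring R] {D : Finset R} {r : ℕ}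

theorem coeff_sum_taylor_of_power_sums_eq_zero (hr : r ≠ 0)
    (hD : ∀ j ≠ 0, j < r → ∑ d ∈ D, d ^ j = 0) {g : R[X]} {m : ℕ} (hg : g.natDegree ≤ r + m) :
    (∑ d ∈ D, taylor d g).coeff m =
      D.card * g.coeff m + (r + m).choose m * g.coeff (r + m) * ∑ d ∈ D, d ^ r := by
  have hdeg : (hasseDeriv m g).natDegree ≤ r :=
    (natDegree_hasseDeriv_le g m).trans (Nat.sub_le_iff_le_add.2 hg)
  simp_rw [finsetSum_coeff, taylor_coeff, sum_eval_of_power_sums_eq_zero hr hD hdeg,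
    hasseDeriv_coeff]
  simp

/-- Here `f + C d` is viewed as the value at `C d` of the polynomial `X + C f` over `R[X]`. -/
theorem coeff_sum_add_C_pow_of_power_sums_eq_zero (hr : r ≠ 0)
    (hD : ∀ j ≠ 0, j < r → ∑ d ∈ D, d ^ j = 0) (f : R[X]) {k m : ℕ} (hk : k ≤ r)
    (hkm : k < r + m) :
    (∑ d ∈ D, (f + C d) ^ k).coeff m = D.card * (f ^ k).coeff m := by
  have hDC : ∀ j ≠ 0, j < r → ∑ d ∈ D, (C d : R[X]) ^ j = 0 := fun j hj hjr => by
    simpa using congrArg C (hD j hj hjr)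
  have hdeg : ((X + C f : R[X][X]) ^ k).natDegree ≤ r :=
    (natDegree_pow_le_of_le k (natDegree_add_C.trans_le natDegree_X_le)).trans (by rwa [mul_one])
  have hconst : ((X + C f : R[X][X]) ^ k).coeff r = C ((k.choose r : ℕ) : R) := by
    rw [coeff_X_add_C_pow, Nat.sub_eq_zero_of_le hk, pow_zero, one_mul, C_eq_natCast]
  have hsum : ∑ d ∈ D, (f + C d) ^ k = D.card * f ^ k + C (k.choose r * ∑ d ∈ D, d ^ r) := by
    have := sum_eval_of_power_sums_eq_zero hr hDC hdeg
    rw [hconst] at this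
    simpa [add_comm, coeff_X_add_C_pow] using this
  have hconst_coeff : (C (k.choose r * ∑ d ∈ D, d ^ r)).coeff m = 0 := by
    rcases hk.lt_or_eq with hlt | rfl
    · simp [Nat.choose_eq_zero_of_lt hlt]
    · exact coeff_C_of_ne_zero (by omega)
  rw [hsum, coeff_add, hconst_coeff, add_zero, coeff_natCast_mul]

end PowerSums

section Invariance

open Polynomial

theorem exists_mul_mem_Ico {n p r : ℕ} (hn : 0 < n) (hnp : n < p) (hrp : 2 * r < p) :
    ∃ k ≤ r, n * k ∈ Set.Ico r p := by
  refine ⟨r ⌈/⌉ n, (ceilDiv_le_iff_le_mul hn).2 (Nat.le_mul_of_pos_left r hn),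
    le_smul_ceilDiv hn, ?_⟩
  rcases le_or_gt r n with hrn | hnr
  · have : r ⌈/⌉ n ≤ 1 := (ceilDiv_le_iff_le_mul hn).2 (by simpa)
    exact (mul_le_of_le_one_right' this).trans_lt hnp
  · have : n * (r ⌈/⌉ n) ≤ r + n - 1 := Nat.mul_div_le _ _
    omega

theorem natCast_choose_ne_zero_of_lt (R : Type*) [AddMonoidWithOne R] {p : ℕ} [CharP R p]
    (hp : p.Prime) {n m : ℕ} (hn : n < p) (hm : m ≤ n) : (n.choose m : R) ≠ 0 := by
  rw [Ne, CharP.cast_eq_zero_iff R p]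
  intro hdvd
  have hfact : p ∣ n.factorial := by
    rw [← Nat.choose_mul_factorial_mul_factorial hm, mul_assoc]
    exact hdvd.mul_right _
  exact hn.not_ge (hp.dvd_factorial.1 hfact)

variable {F : Type*} [Field F] {p : ℕ} [Fact p.Prime] [CharP F p] {D : Finset F} {f : F[X]}

theorem sum_taylor_pow_eq_sum_add_C_pow (hinj : Function.Injective fun x => f.eval x)
    (hinv : ∀ x, ∀ d ∈ D, f.eval (x + d) - f.eval x ∈ D) {k : ℕ} (hk : f.natDegree * k < p) :
    ∑ d ∈ D, taylor d (f ^ k) = ∑ d ∈ D, (f + C d) ^ k := by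
  have heval (x : F) : (∑ d ∈ D, taylor d (f ^ k)).eval x = (∑ d ∈ D, (f + C d) ^ k).eval x := by
    have hinjOn : Set.InjOn (fun d => f.eval (x + d) - f.eval x) D := fun a _ b _ hab =>
      add_left_cancel (hinj (sub_left_injective hab))
    simp only [eval_finsetSum, taylor_eval, eval_pow, eval_add, eval_C]
    refine Finset.sum_nbij (fun d => f.eval (x + d) - f.eval x) (hinv x) hinjOn
      (Finset.surjOn_of_injOn_of_card_le _ (hinv x) hinjOn le_rfl) fun d _ => ?_
    rw [add_comm x d, add_sub_cancel]
  have hdeg : (∑ d ∈ D, taylor d (f ^ k) - ∑ d ∈ D, (f + C d) ^ k).natDegree ≤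
      f.natDegree * k := by
    refine (natDegree_sub_le _ _).trans (max_le ?_ ?_) <;>
      refine natDegree_sum_le_of_forall_le _ _ fun d _ => ?_ <;>
      simp [mul_comm]
  refine sub_eq_zero.1 (eq_zero_of_natDegree_lt_card_of_eval_eq_zero _
    (ZMod.castHom dvd_rfl F).injective (fun x => ?_) (hdeg.trans_lt (by rwa [ZMod.card])))
  rw [eval_sub, heval, sub_self]

/-- The bound `2 |D| < p` makes room for an exponent `k` with `r ≤ n k < p`, where `n` is the degree
of `f` and `r` is the first positive exponent with nonvanishing power sum over `D`. -/
theorem natDegree_le_one_of_sub_mem {a : F} (ha : a ∈ D) (ha0 : a ≠ 0) (hD : 2 * D.card < p)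
    (hf : f.natDegree < p) (hinj : Function.Injective fun x => f.eval x)
    (hinv : ∀ x, ∀ d ∈ D, f.eval (x + d) - f.eval x ∈ D) : f.natDegree ≤ 1 := by
  classical
  by_contra! hn
  have hex := exists_power_sum_ne_zero ha ha0
  obtain ⟨r, ⟨hr, hrD, hsum⟩, hmin⟩ : ∃ r, (r ≠ 0 ∧ r ≤ D.card ∧ ∑ d ∈ D, d ^ r ≠ 0) ∧
      ∀ j ≠ 0, j < r → ∑ d ∈ D, d ^ j = 0 := by
    refine ⟨Nat.find hex, Nat.find_spec hex, fun j hj hlt => by_contra fun hne => ?_⟩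
    exact Nat.find_min hex hlt ⟨hj, hlt.le.trans (Nat.find_spec hex).2.1, hne⟩
  obtain ⟨k, hkr, hrk, hkp⟩ := exists_mul_mem_Ico (r := r) (by omega) hf (by omega)
  obtain ⟨m, hm⟩ := Nat.exists_eq_add_of_le hrk
  have hk : k ≠ 0 := by
    rintro rfl
    omega
  have hkm : k < r + m := hm ▸ lt_mul_left (Nat.pos_of_ne_zero hk) hn
  have hdeg : (f ^ k).natDegree = r + m := by rw [natDegree_pow, mul_comm, hm]
  have hcoeff := congrArg (coeff · m) (sum_taylor_pow_eq_sum_add_C_pow hinj hinv hkp)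
  rw [coeff_sum_taylor_of_power_sums_eq_zero hr hmin hdeg.le,
    coeff_sum_add_C_pow_of_power_sums_eq_zero hr hmin f hkr hkm, add_eq_left] at hcoeff
  have hchoose : ((r + m).choose m : F) ≠ 0 :=
    natCast_choose_ne_zero_of_lt F Fact.out (hm ▸ hkp) (Nat.le_add_left m r)
  have hlead : (f ^ k).coeff (r + m) ≠ 0 := by
    rw [← hdeg, coeff_natDegree, leadingCoeff_pow]
    exact pow_ne_zero k (leadingCoeff_ne_zero.2 (ne_zero_of_natDegree_gt hn))
  exact mul_ne_zero (mul_ne_zero hchoose hlead) hsum hcoeff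

end Invariance

theorem two_mul_card_lt_card_of_neg_notMem {G : Type*} [AddGroup G] [Fintype G] {D : Finset G}
    (hzero : 0 ∉ D) (hneg : ∀ d ∈ D, -d ∉ D) : 2 * D.card < Fintype.card G := by
  classical
  have hdisj : Disjoint D (D.map (Equiv.neg G).toEmbedding) := by
    rw [Finset.disjoint_left]
    simpa [Finset.mem_map_equiv] using hneg
  calc 2 * D.card = (D.disjUnion _ hdisj).card := by
        rw [Finset.card_disjUnion, Finset.card_map, two_mul]
    _ < Fintype.card G := Finset.card_lt_univ_of_notMem (x := 0) (by simpa using hzero)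

theorem apply_eq_self_of_apply_apply_eq_self {α : Type*} {h : Perm α} (hodd : Odd (orderOf h))
    {x : α} (hx : h (h x) = x) : h x = x := by
  have hperiod : Function.IsPeriodicPt h (orderOf h) x := by
    simp [Function.IsPeriodicPt, Function.IsFixedPt, Equiv.Perm.iterate_eq_pow, pow_orderOf_eq_one]
  have htwo : Function.IsPeriodicPt h 2 x := hx
  simpa [(Nat.coprime_two_left.2 hodd).gcd_eq_one] using (htwo.gcd hperiod).eq

section OrbitalDifferences

variable {G : Type*} [AddCommGroup G] {K : Subgroup (Perm G)} {a d : G}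

/-- The differences `y - x` of the pairs `(x, y)` in the orbital (orbit on pairs) of `(0, a)` under
a permutation group `K`. If `K` contains the translations, `(x, y)` lies in that orbital exactly
when `y - x` is one of these differences. -/
def orbitalDifferences (K : Subgroup (Perm G)) (a : G) : Set G :=
  {d | ∃ g ∈ K, g a - g 0 = d}

theorem self_mem_orbitalDifferences : a ∈ orbitalDifferences K a :=
  ⟨1, K.one_mem, sub_zero a⟩

theorem zero_notMem_orbitalDifferences (ha : a ≠ 0) : 0 ∉ orbitalDifferences K a := by
  rintro ⟨g, -, hg⟩
  exact ha (g.injective (sub_eq_zero.1 hg))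

theorem exists_apply_of_mem_orbitalDifferences (hK : ∀ c, Equiv.addRight c ∈ K)
    (hd : d ∈ orbitalDifferences K a) (x : G) : ∃ g ∈ K, g 0 = x ∧ g a = x + d := by
  obtain ⟨g, hg, rfl⟩ := hd
  refine ⟨Equiv.addRight (x - g 0) * g, K.mul_mem (hK _) hg, by simp, ?_⟩
  simp only [Perm.mul_apply, Equiv.coe_addRight]
  abel

theorem apply_sub_apply_mem_orbitalDifferences (hK : ∀ c, Equiv.addRight c ∈ K) {g : Perm G}
    (hg : g ∈ K) (x : G) (hd : d ∈ orbitalDifferences K a) :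
    g (x + d) - g x ∈ orbitalDifferences K a := by
  obtain ⟨h, hh, h0, ha⟩ := exists_apply_of_mem_orbitalDifferences hK hd x
  exact ⟨g * h, K.mul_mem hg hh, by simp [h0, ha]⟩

/-- If `d` and `-d` were both differences, `(0, a)` and `(a, 0)` would lie in the same orbital. -/
theorem neg_notMem_orbitalDifferences (hK : ∀ c, Equiv.addRight c ∈ K)
    (hodd : ∀ g ∈ K, Odd (orderOf g)) (ha : a ≠ 0) (hd : d ∈ orbitalDifferences K a) :
    -d ∉ orbitalDifferences K a := by
  intro hd'
  obtain ⟨g, hg, g0, ga⟩ := exists_apply_of_mem_orbitalDifferences hK hd 0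
  obtain ⟨h, hh, h0, ha'⟩ := exists_apply_of_mem_orbitalDifferences hK hd' d
  have hswap_zero : (h⁻¹ * g) 0 = a := by
    rw [Perm.mul_apply, Perm.inv_eq_iff_eq, g0, ha', add_neg_cancel]
  have hswap_a : (h⁻¹ * g) a = 0 := by
    rw [Perm.mul_apply, Perm.inv_eq_iff_eq, ga, h0, zero_add]
  have hfix := apply_eq_self_of_apply_apply_eq_self (hodd _ (K.mul_mem (K.inv_mem hh) hg))
    (x := 0) (by rw [hswap_zero, hswap_a])
  exact ha (hswap_zero.symm.trans hfix)

end OrbitalDifferences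

open Polynomial in
theorem exists_natDegree_lt_card_eval_eq {F : Type*} [Field F] [Fintype F] (g : F → F) :
    ∃ f : F[X], f.natDegree < Fintype.card F ∧ ∀ x, f.eval x = g x := by
  classical
  have hinj : Set.InjOn id ((Finset.univ : Finset F) : Set F) := Function.injective_id.injOn
  refine ⟨Lagrange.interpolate Finset.univ id g, ?_, fun x =>
    Lagrange.eval_interpolate_at_node g hinj (Finset.mem_univ x)⟩
  rcases eq_or_ne (Lagrange.interpolate Finset.univ id g) 0 with hzero | hzero
  · simpa [hzero] using Fintype.card_pos
  · exact (natDegree_lt_iff_degree_lt hzero).2 (Lagrange.degree_interpolate_lt g hinj)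

theorem addRight_mem_of_addRight_one_mem {n : ℕ} [NeZero n] {K : Subgroup (Perm (ZMod n))}
    (hK : Equiv.addRight 1 ∈ K) (c : ZMod n) : Equiv.addRight c ∈ K := by
  simpa [Equiv.nsmul_addRight] using K.pow_mem hK c.val

theorem orderOf_addRight_one (n : ℕ) : orderOf (Equiv.addRight (1 : ZMod n)) = n := by
  refine Nat.dvd_right_iff_eq.1 fun k => ?_
  rw [orderOf_dvd_iff_pow_eq_one, ← ZMod.natCast_eq_zero_iff]
  simp [Equiv.nsmul_addRight, Equiv.ext_iff]

theorem isConj_of_orderOf_eq_card {α : Type*} [Fintype α] (hα : (Fintype.card α).Prime)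
    {s t : Perm α} (hs : orderOf s = Fintype.card α) (ht : orderOf t = Fintype.card α) :
    IsConj s t := by
  classical
  have hs_cycle := Perm.isCycle_of_prime_order'' hα hs
  have ht_cycle := Perm.isCycle_of_prime_order'' hα ht
  exact hs_cycle.isConj ht_cycle (by rw [← hs_cycle.orderOf, ← ht_cycle.orderOf, hs, ht])

section PrimeDegree

variable {p : ℕ} [Fact p.Prime]

theorem exists_affine_of_odd_orderOf {K : Subgroup (Perm (ZMod p))} (hK : Equiv.addRight 1 ∈ K)
    (hodd : ∀ g ∈ K, Odd (orderOf g)) {g : Perm (ZMod p)} (hg : g ∈ K) :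
    ∃ a b, ∀ x, g x = a * x + b := by
  have htrans := addRight_mem_of_addRight_one_mem hK
  let D : Finset (ZMod p) := (orbitalDifferences K 1).toFinite.toFinset
  have hmem (d) : d ∈ D ↔ d ∈ orbitalDifferences K 1 := Set.Finite.mem_toFinset _
  have hcard : 2 * D.card < p := by
    refine (two_mul_card_lt_card_of_neg_notMem ?_ fun d hd => ?_).trans_eq (ZMod.card p)
    · exact (hmem 0).not.2 (zero_notMem_orbitalDifferences one_ne_zero)
    · rw [hmem] at hd ⊢
      exact neg_notMem_orbitalDifferences htrans hodd one_ne_zero hd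
  obtain ⟨f, hdeg, hf⟩ := exists_natDegree_lt_card_eval_eq g
  rw [ZMod.card] at hdeg
  have hinv : ∀ x, ∀ d ∈ D, f.eval (x + d) - f.eval x ∈ D := fun x d hd => by
    rw [hmem] at hd ⊢
    rw [hf, hf]
    exact apply_sub_apply_mem_orbitalDifferences htrans hg x hd
  have hlinear : f.natDegree ≤ 1 :=
    natDegree_le_one_of_sub_mem ((hmem 1).2 self_mem_orbitalDifferences) one_ne_zero hcard hdeg
      (by simpa only [hf] using g.injective) hinv
  obtain ⟨a, b, rfl⟩ := Polynomial.exists_eq_X_add_C_of_natDegree_le_one hlinear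
  exact ⟨a, b, fun x => by simp [← hf]⟩

theorem commute_addRight_one_of_affine {t : Perm (ZMod p)} (ht : t ^ p = 1) {a b : ZMod p}
    (hab : ∀ x, t x = a * x + b) : Commute (Equiv.addRight 1) t := by
  have hslope (n : ℕ) : (t ^ n) 1 - (t ^ n) 0 = a ^ n := by
    induction n with
    | zero => simp
    | succ n ih =>
      rw [pow_succ', Perm.mul_apply, Perm.mul_apply, hab, hab, pow_succ', ← ih]
      ring
  have ha : a = 1 :=
    calc a = a ^ p := (ZMod.pow_card a).symm
      _ = 1 := by simp [← hslope, ht]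
  ext1 x
  simp only [Perm.mul_apply, Equiv.coe_addRight, hab, ha]
  ring

variable {α : Type*}

theorem exists_mulEquiv_apply_eq_addRight_one (hα : Nat.card α = p) {s : Perm α}
    (hs : orderOf s = p) :
    ∃ φ : Perm α ≃* Perm (ZMod p), φ s = Equiv.addRight 1 := by
  have : Finite α := Nat.finite_of_card_ne_zero (hα ▸ NeZero.ne p)
  obtain ⟨e⟩ : Nonempty (α ≃ ZMod p) := Finite.card_eq.1 (by rw [hα, Nat.card_zmod])
  have hconj : IsConj (e.permCongrHom s) (Equiv.addRight 1) := by
    apply isConj_of_orderOf_eq_card <;> rw [ZMod.card]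
    · exact Fact.out
    · rw [MulEquiv.orderOf_eq, hs]
    · exact orderOf_addRight_one p
  obtain ⟨c, hc⟩ := isConj_iff.1 hconj
  exact ⟨e.permCongrHom.trans (MulAut.conj c), hc⟩

theorem commute_of_pow_eq_one_of_odd_card (hα : Nat.card α = p) {K : Subgroup (Perm α)}
    (hodd : Odd (Nat.card K)) {s t : Perm α} (hsK : s ∈ K) (htK : t ∈ K)
    (hs : s ^ p = 1) (ht : t ^ p = 1) : Commute s t := by
  rcases eq_or_ne s 1 with rfl | hs1
  · exact Commute.one_left t
  obtain ⟨φ, hφ⟩ := exists_mulEquiv_apply_eq_addRight_one hα (orderOf_eq_prime hs hs1)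
  have hodd_map : ∀ g ∈ K.map φ.toMonoidHom, Odd (orderOf g) := by
    rintro _ ⟨g, hg, rfl⟩
    exact (φ.orderOf_eq g).symm ▸ hodd.of_dvd_nat (K.orderOf_dvd_natCard hg)
  obtain ⟨a, b, hab⟩ := exists_affine_of_odd_orderOf (K.mem_map.2 ⟨s, hsK, hφ⟩) hodd_map
    (K.mem_map_of_mem _ htK)
  have hcomm := commute_addRight_one_of_affine (t := φ t) (by rw [← map_pow, ht, map_one]) hab
  rw [← hφ] at hcomm
  exact (commute_map_iff φ.injective).1 hcomm

end PrimeDegree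

theorem even_card_of_nonabelian_two_p_cycles_general {p : ℕ} (hp : p.Prime) {α : Type*}
    (hα : Nat.card α = p) {S : Set (Perm α)} (hS : ∀ s ∈ S, s ^ p = 1)
    (hnonab : ¬ ∀ x ∈ Subgroup.closure S, ∀ y ∈ Subgroup.closure S, x * y = y * x) :
    Even (Nat.card (Subgroup.closure S)) := by
  have : Fact p.Prime := ⟨hp⟩
  by_contra hodd
  rw [Nat.not_even_iff_odd] at hodd
  have hcomm : ∀ s ∈ S, ∀ t ∈ S, s * t = t * s := fun s hs t ht =>
    commute_of_pow_eq_one_of_odd_card hα hodd (Subgroup.subset_closure hs)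
      (Subgroup.subset_closure ht) (hS s hs) (hS t ht)
  have := Subgroup.isMulCommutative_closure hcomm
  exact hnonab fun x hx y hy => setLike_mul_comm hx hy

/-- Proposition: let `p` be a prime and let `K ≤ A_p` be generated by two `p`-cycles. If `K`
is not abelian, then the order of `K` is even. -/
theorem even_card_of_nonabelian_two_p_cycles
    (p : ℕ) (hp : p.Prime) (s t : Equiv.Perm (Fin p))
    (hs : s.IsCycle) (hssupp : s.support.card = p)
    (ht : t.IsCycle) (htsupp : t.support.card = p)
    (K : Subgroup (Equiv.Perm (Fin p))) (hK : K = Subgroup.closure ({s, t} : Set (Equiv.Perm (Fin p))))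
    (hKA : K ≤ alternatingGroup (Fin p))
    (hnonab : ¬ ∀ x ∈ K, ∀ y ∈ K, x * y = y * x) :
    Even (Nat.card K) := by
  subst hK
  refine even_card_of_nonabelian_two_p_cycles_general hp (Nat.card_fin p) ?_ hnonab
  simp [← orderOf_dvd_iff_pow_eq_one, hs.orderOf, ht.orderOf, hssupp, htsupp]
end

section
/- Let s, t ∈ Aₙ be two cycles with supports S and T respectively. Assume that S ∩ T, S \ T and T \ S are all nonempty. Then the subgroup ⟨s, t⟩ generated by s and t has even order. -/
/-!
Write `S` and `T` for the two supports and `G = ⟨s, t⟩`. All pairs in `S × (T \ S)` lie in a single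
`G`-orbit: move the first coordinate by `s`, which fixes the second, to a point of `S \ T`; then
move the second coordinate within `T` by `t`; then move the first one back by `s`. As `t` is a
cycle, it leaves `S` at some `a ∈ S` and enters it at some `b ∉ S`, so `t` carries the pair `(a, b)`
of `S × (T \ S)` to `(t a, t b)`, whose reverse `(t b, t a)` is again in `S × (T \ S)`. Hence some
element of `G` interchanges `t a` and `t b`, and its order is even.
-/

lemma even_orderOf_of_smul_interchange {M α : Type*} [Monoid M] [MulAction M α] {g : M} {a b : α}
    (hne : a ≠ b) (hab : g • a = b) (hba : g • b = a) : Even (orderOf g) := by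
  have hperiod : MulAction.period g a = 2 :=
    Function.minimalPeriod_eq_prime
      (show g • g • a = a by rw [hab, hba]) (show ¬g • a = a from hab ▸ hne.symm)
  exact even_iff_two_dvd.2 (hperiod ▸ MulAction.period_dvd_orderOf g a)

lemma even_natCard_of_prod_subset_orbit {G α : Type*} [Group G] [MulAction G α] {A B : Set α}
    (hdisj : Disjoint A B)
    (horbit : ∀ p ∈ A ×ˢ B, A ×ˢ B ⊆ MulAction.orbit G p)
    {g : G} {a b : α} (ha : a ∈ A) (hb : b ∈ B) (hga : g • a ∈ B) (hgb : g • b ∈ A) :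
    Even (Nat.card G) := by
  obtain ⟨k, hk⟩ : (g • b, g • a) ∈ MulAction.orbit G (a, b) := horbit _ ⟨ha, hb⟩ ⟨hgb, hga⟩
  obtain ⟨hka, hkb⟩ : k • a = g • b ∧ k • b = g • a := Prod.ext_iff.1 hk
  have heven : Even (orderOf (k * g⁻¹)) :=
    even_orderOf_of_smul_interchange (hdisj.ne_of_mem hgb hga).symm
      (by rw [mul_smul, inv_smul_smul, hka]) (by rw [mul_smul, inv_smul_smul, hkb])
  exact heven.trans_dvd (orderOf_dvd_natCard _)

lemma exists_mem_apply_notMem_of_sameCycle {α : Type*} [Finite α] {f : Equiv.Perm α} {A : Set α}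
    {x y : α} (hxy : f.SameCycle x y) (hx : x ∈ A) (hy : y ∉ A) : ∃ a ∈ A, f a ∉ A := by
  by_contra! hmaps
  obtain ⟨n, rfl⟩ := hxy.exists_nat_pow_eq
  exact hy (Set.MapsTo.perm_pow hmaps n hx)

lemma prodMk_mem_orbit_of_sameCycle {α : Type*} {G : Subgroup (Equiv.Perm α)} {s t : Equiv.Perm α}
    (hsG : s ∈ G) (htG : t ∈ G) {x a a' b b' : α} (hax : s.SameCycle a x)
    (hxa' : s.SameCycle x a') (hbb' : t.SameCycle b b')
    (htx : t x = x) (hsb : s b = b) (hsb' : s b' = b') :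
    (a', b') ∈ MulAction.orbit G (a, b) := by
  obtain ⟨i, hi⟩ := hax
  obtain ⟨j, hj⟩ := hbb'
  obtain ⟨k, hk⟩ := hxa'
  refine ⟨⟨s ^ k * t ^ j * s ^ i,
    G.mul_mem (G.mul_mem (G.zpow_mem hsG k) (G.zpow_mem htG j)) (G.zpow_mem hsG i)⟩, ?_⟩
  refine Prod.ext ?_ ?_
  · calc (s ^ k) ((t ^ j) ((s ^ i) a))
      _ = (s ^ k) x := by rw [hi, Equiv.Perm.zpow_apply_eq_self_of_apply_eq_self htx]
      _ = a' := hk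
  · calc (s ^ k) ((t ^ j) ((s ^ i) b))
      _ = (s ^ k) b' := by rw [Equiv.Perm.zpow_apply_eq_self_of_apply_eq_self hsb, hj]
      _ = b' := Equiv.Perm.zpow_apply_eq_self_of_apply_eq_self hsb' k

section Overlap

variable {α : Type*} [Fintype α] [DecidableEq α] {s t : Equiv.Perm α}

lemma support_prod_sdiff_subset_orbit (hs : s.IsCycle) (ht : t.IsCycle)
    (hSnotT : (s.support \ t.support).Nonempty) {G : Subgroup (Equiv.Perm α)}
    (hsG : s ∈ G) (htG : t ∈ G) :
    ∀ p ∈ (s.support : Set α) ×ˢ (t.support \ s.support : Set α),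
      (s.support : Set α) ×ˢ (t.support \ s.support : Set α) ⊆ MulAction.orbit G p := by
  obtain ⟨x, hx⟩ := hSnotT
  obtain ⟨hxS, hxT⟩ := Finset.mem_sdiff.1 hx
  rw [Equiv.Perm.mem_support] at hxS
  rintro ⟨a, b⟩ ⟨haS, hbT, hbS⟩ ⟨a', b'⟩ ⟨haS', hbT', hbS'⟩
  simp only [Finset.mem_coe, Equiv.Perm.mem_support] at haS hbT haS' hbT'
  exact prodMk_mem_orbit_of_sameCycle hsG htG (hs.sameCycle haS hxS) (hs.sameCycle hxS haS')
    (ht.sameCycle hbT hbT') (Equiv.Perm.notMem_support.1 hxT) (Equiv.Perm.notMem_support.1 hbS)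
    (Equiv.Perm.notMem_support.1 hbS')

theorem even_card_of_overlapping_cycles_general (hs : s.IsCycle) (ht : t.IsCycle)
    (hST : (s.support ∩ t.support).Nonempty)
    (hSnotT : (s.support \ t.support).Nonempty)
    (hTnotS : (t.support \ s.support).Nonempty) :
    Even (Nat.card (Subgroup.closure ({s, t} : Set (Equiv.Perm α)))) := by
  obtain ⟨z, hz⟩ := hST
  obtain ⟨y, hy⟩ := hTnotS
  obtain ⟨hzS, hzT⟩ := Finset.mem_inter.1 hz
  obtain ⟨hyT, hyS⟩ := Finset.mem_sdiff.1 hy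
  have hzy : t.SameCycle z y :=
    ht.sameCycle (Equiv.Perm.mem_support.1 hzT) (Equiv.Perm.mem_support.1 hyT)
  obtain ⟨a, haS, htaS⟩ : ∃ a ∈ (s.support : Set α), t a ∉ (s.support : Set α) :=
    exists_mem_apply_notMem_of_sameCycle hzy hzS hyS
  obtain ⟨b, hbS, htbS⟩ : ∃ b ∈ (s.support : Set α)ᶜ, t b ∉ (s.support : Set α)ᶜ :=
    exists_mem_apply_notMem_of_sameCycle hzy.symm hyS (not_not.2 hzS)
  have hsG : s ∈ Subgroup.closure {s, t} := Subgroup.subset_closure (Set.mem_insert _ _)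
  have htG : t ∈ Subgroup.closure {s, t} := Subgroup.subset_closure (Set.mem_insert_of_mem _ rfl)
  have htaT : t a ∈ t.support :=
    Equiv.Perm.apply_mem_support.2 (Equiv.Perm.mem_support.2 fun h => htaS (h.symm ▸ haS))
  have hbT : b ∈ t.support := Equiv.Perm.mem_support.2 fun h => htbS (h.symm ▸ hbS)
  exact even_natCard_of_prod_subset_orbit disjoint_sdiff_self_right
    (support_prod_sdiff_subset_orbit hs ht hSnotT hsG htG) (g := ⟨t, htG⟩)
    haS ⟨hbT, hbS⟩ ⟨htaT, htaS⟩ (not_not.1 htbS)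

end Overlap

/-- Proposition: let `s, t ∈ Aₙ` be cycles with supports `S` and `T` such that `S ∩ T`,
`S \ T` and `T \ S` are all nonempty. Then `⟨s, t⟩` has even order. -/
theorem even_card_of_overlapping_cycles
    (n : ℕ) (s t : Equiv.Perm (Fin n))
    (hsA : s ∈ alternatingGroup (Fin n)) (htA : t ∈ alternatingGroup (Fin n))
    (hs : s.IsCycle) (ht : t.IsCycle)
    (hST : (s.support ∩ t.support).Nonempty)
    (hSnotT : (s.support \ t.support).Nonempty)
    (hTnotS : (t.support \ s.support).Nonempty) :
    Even (Nat.card (Subgroup.closure ({s, t} : Set (Equiv.Perm (Fin n))))) :=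
  even_card_of_overlapping_cycles_general hs ht hST hSnotT hTnotS
end
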